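/- arXiv:2003.10346 — 6 statements merged into one kernel-verified Lean document; each statement's English description precedes it below -/
import Mathlib

section
/- For fixed β ∈ (0,2) and t₁, t₂ ∈ (0,∞), the quantity Ψ_R(t₁,t₂;s) = R^{β−4} ∫_{ℝ²×ℝ²} φ_{t₁,R}(s,y) φ_{t₂,R}(s,z) ‖y−z‖^{−β} dy dz is uniformly bounded over s ∈ [0, min(t₁,t₂)] and R > 0; more precisely there is a constant C (depending only on β, t₁, t₂) such that Ψ_R(t₁,t₂;s) ≤ C for all s ∈ [0, min(t₁,t₂)] and all R > 0. -/
/-!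
The function `φ_{t,R}(s, ·)` is the convolution of the indicator of `B_R` with `G_{t-s}`, whose
total mass is `t - s`, so the double integral is an average, over the two wave kernels, of Riesz
energies between translates of `B_R`. The function `‖·‖ ^ (-β)` integrates over a disc of radius `R`
to `O(R ^ (2 - β))`, wherever the singularity lies: within distance `R` of it use polar coordinates,
and elsewhere the kernel is at most `R ^ (-β)`. The other disc contributes its area, so the energy
is `O(R ^ (4 - β))`.

All estimates are made on lower Lebesgue integrals of `‖·‖ₑ`, which dominate the Bochner integrals
without any integrability hypothesis.
-/

open MeasureTheory Real

noncomputable section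

/-- `ℝ²` with the Euclidean norm. -/
abbrev E2 : Type := EuclideanSpace ℝ (Fin 2)

/-- The fundamental solution of the 2D wave equation. -/
def G (t : ℝ) (x : E2) : ℝ :=
  if ‖x‖ < t then (2 * π * Real.sqrt (t ^ 2 - ‖x‖ ^ 2))⁻¹ else 0

/-- `φ_{t,R}(s,y) = ∫_{B_R} G_{t-s}(x-y) dx`. -/
def phi (t R s : ℝ) (y : E2) : ℝ :=
  ∫ x in Metric.closedBall (0 : E2) R, G (t - s) (x - y)

/-- `Ψ_R(t₁,t₂;s) = R^{β-4} ∫∫ φ_{t₁,R}(s,y) φ_{t₂,R}(s,z) ‖y-z‖^{-β} dy dz`. -/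
def Psi (β t₁ t₂ R s : ℝ) : ℝ :=
  R ^ (β - 4) * ∫ y : E2, ∫ z : E2, phi t₁ R s y * phi t₂ R s z * ‖y - z‖ ^ (-β)

section Convolution

variable {E : Type*} [AddCommGroup E] [MeasurableSpace E] [MeasurableAdd₂ E] [MeasurableNeg E]
  {μ ν : Measure E} [SFinite μ] [μ.IsAddLeftInvariant] [μ.IsNegInvariant] [SFinite ν]

theorem lintegral_lintegral_sub_mul {f k : E → ENNReal} (hf : Measurable f) (hk : Measurable k) :
    ∫⁻ z, (∫⁻ x, f (x - z) ∂ν) * k z ∂μ = ∫⁻ w, f w * ∫⁻ x, k (x - w) ∂ν ∂μ :=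
  calc
    _ = ∫⁻ z, ∫⁻ x, f (x - z) * k z ∂ν ∂μ :=
      lintegral_congr fun z => (lintegral_mul_const _ (by fun_prop)).symm
    _ = ∫⁻ x, ∫⁻ z, f (x - z) * k z ∂μ ∂ν := lintegral_lintegral_swap (by fun_prop)
    _ = ∫⁻ x, ∫⁻ w, f w * k (x - w) ∂μ ∂ν := by
      refine lintegral_congr fun x => ?_
      simpa only [sub_sub_cancel] using
        lintegral_sub_left_eq_self (μ := μ) (fun w => f w * k (x - w)) x
    _ = ∫⁻ w, ∫⁻ x, f w * k (x - w) ∂ν ∂μ := lintegral_lintegral_swap (by fun_prop)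
    _ = _ := lintegral_congr fun w => lintegral_const_mul _ (by fun_prop)

end Convolution

section RieszKernel

variable {E : Type*} [NormedAddCommGroup E] [MeasurableSpace E] [BorelSpace E] {μ : Measure E}

theorem setLIntegral_enorm_norm_sub_rpow_neg_le [μ.IsAddRightInvariant] {β R : ℝ} (hβ : 0 ≤ β)
    (hR : 0 < R) (A : Set E) (w : E) :
    ∫⁻ x in A, ‖‖x - w‖ ^ (-β)‖ₑ ∂μ
      ≤ (∫⁻ x in Metric.ball 0 R, ‖‖x‖ ^ (-β)‖ₑ ∂μ) + ENNReal.ofReal (R ^ (-β)) * μ A := by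
  set near : E → ENNReal := (Metric.ball 0 R).indicator fun u => ‖‖u‖ ^ (-β)‖ₑ with hnear
  have le_near_add_far (u : E) : ‖‖u‖ ^ (-β)‖ₑ ≤ near u + ENNReal.ofReal (R ^ (-β)) := by
    by_cases hu : u ∈ Metric.ball 0 R
    · rw [hnear, Set.indicator_of_mem hu]
      exact le_self_add
    · rw [Real.enorm_of_nonneg (by positivity)]
      refine le_add_left (ENNReal.ofReal_le_ofReal ?_)
      exact Real.rpow_le_rpow_of_nonpos hR (by simpa using hu) (neg_nonpos.2 hβ)
  calc
    _ ≤ ∫⁻ x in A, (near (x - w) + ENNReal.ofReal (R ^ (-β))) ∂μ :=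
      lintegral_mono fun x => le_near_add_far (x - w)
    _ = (∫⁻ x in A, near (x - w) ∂μ) + ENNReal.ofReal (R ^ (-β)) * μ A := by
      rw [lintegral_add_right _ measurable_const, setLIntegral_const]
    _ ≤ (∫⁻ x, near (x - w) ∂μ) + ENNReal.ofReal (R ^ (-β)) * μ A :=
      add_le_add_left (setLIntegral_le_lintegral _ _) _
    _ = _ := by
      rw [lintegral_sub_right_eq_self near w, hnear, lintegral_indicator measurableSet_ball]

variable [NormedSpace ℝ E] [FiniteDimensional ℝ E] [Nontrivial E] [μ.IsAddHaarMeasure]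

theorem setIntegral_ball_fun_norm_addHaar {F : Type*} [NormedAddCommGroup F] [NormedSpace ℝ F]
    (f : ℝ → F) (a : ℝ) :
    ∫ x in Metric.ball (0 : E) a, f ‖x‖ ∂μ = Module.finrank ℝ E • μ.real (Metric.ball 0 1) •
      ∫ r in Set.Ioo 0 a, r ^ (Module.finrank ℝ E - 1) • f r := by
  have indicator_norm : (Metric.ball (0 : E) a).indicator (fun x => f ‖x‖)
      = fun x => (Set.Iio a).indicator f ‖x‖ := by
    ext x
    simp only [Set.indicator, mem_ball_zero_iff, Set.mem_Iio]
  have indicator_smul (r : ℝ) : r ^ (Module.finrank ℝ E - 1) • (Set.Iio a).indicator f r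
      = (Set.Iio a).indicator (fun r => r ^ (Module.finrank ℝ E - 1) • f r) r :=
    (Set.indicator_smul_apply _ (fun r => r ^ (Module.finrank ℝ E - 1)) f r).symm
  rw [← integral_indicator measurableSet_ball, indicator_norm, integral_fun_norm_addHaar]
  simp_rw [indicator_smul]
  rw [setIntegral_indicator measurableSet_Iio, Set.Ioi_inter_Iio]

/-- The primitive `F` is only required to be continuous at the endpoints, so that `f` may have
integrable singularities there. -/
theorem setLIntegral_ball_enorm_norm_of_hasDerivAt {f F : ℝ → ℝ} {a : ℝ} (ha : 0 ≤ a)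
    (hf : ∀ r ∈ Set.Ico 0 a, 0 ≤ f r) (hF : ContinuousOn F (Set.Icc 0 a))
    (hF' : ∀ r ∈ Set.Ioo 0 a, HasDerivAt F (r ^ (Module.finrank ℝ E - 1) * f r) r) :
    ∫⁻ x in Metric.ball (0 : E) a, ‖f ‖x‖‖ₑ ∂μ
      = ENNReal.ofReal (Module.finrank ℝ E * μ.real (Metric.ball 0 1) * (F a - F 0)) := by
  have radial_integrable :
      IntegrableOn (fun r => r ^ (Module.finrank ℝ E - 1) * f r) (Set.Ioc 0 a) :=
    intervalIntegral.integrableOn_deriv_of_nonneg hF hF' fun r hr =>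
      mul_nonneg (pow_nonneg hr.1.le _) (hf r (Set.Ioo_subset_Ico_self hr))
  have radial_integral : ∫ r in Set.Ioo 0 a, r ^ (Module.finrank ℝ E - 1) * f r = F a - F 0 := by
    rw [← integral_Ioc_eq_integral_Ioo, ← intervalIntegral.integral_of_le ha]
    exact intervalIntegral.integral_eq_sub_of_hasDerivAt_of_le ha hF hF'
      ((intervalIntegrable_iff_integrableOn_Ioc_of_le ha).2 radial_integrable)
  have ball_integrable : IntegrableOn (fun x : E => f ‖x‖) (Metric.ball 0 a) μ :=
    (integrableOn_fun_norm_addHaar μ).2 (radial_integrable.mono_set Set.Ioo_subset_Ioc_self)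
  have ball_integral : ∫ x in Metric.ball (0 : E) a, f ‖x‖ ∂μ
      = Module.finrank ℝ E * μ.real (Metric.ball 0 1) * (F a - F 0) := by
    simp only [setIntegral_ball_fun_norm_addHaar, smul_eq_mul, nsmul_eq_mul, radial_integral,
      mul_assoc]
  have enorm_eq : ∀ x ∈ Metric.ball (0 : E) a, ‖f ‖x‖‖ₑ = ENNReal.ofReal (f ‖x‖) := fun x hx =>
    Real.enorm_of_nonneg (hf _ ⟨norm_nonneg x, mem_ball_zero_iff.1 hx⟩)
  rw [setLIntegral_congr_fun measurableSet_ball enorm_eq, ← ball_integral]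
  refine (ofReal_integral_eq_lintegral_ofReal ball_integrable ?_).symm
  filter_upwards [ae_restrict_mem measurableSet_ball] with x hx
  exact hf _ ⟨norm_nonneg x, mem_ball_zero_iff.1 hx⟩

theorem setLIntegral_ball_enorm_norm_rpow_neg {β R : ℝ} (hβ : β < Module.finrank ℝ E)
    (hR : 0 ≤ R) :
    ∫⁻ x in Metric.ball (0 : E) R, ‖‖x‖ ^ (-β)‖ₑ ∂μ
      = ENNReal.ofReal (Module.finrank ℝ E / (Module.finrank ℝ E - β)
          * μ.real (Metric.ball 0 1) * R ^ (Module.finrank ℝ E - β)) := by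
  set d := Module.finrank ℝ E with hd
  have hdβ : 0 < d - β := sub_pos.2 hβ
  have hd1 : 1 ≤ d := Module.finrank_pos
  have hasDerivAt_primitive : ∀ r ∈ Set.Ioo 0 R,
      HasDerivAt (fun r : ℝ => r ^ (d - β) / (d - β)) (r ^ (d - 1) * r ^ (-β)) r := by
    intro r hr
    refine ((Real.hasDerivAt_rpow_const (Or.inl hr.1.ne')).div_const _).congr_deriv ?_
    rw [mul_div_cancel_left₀ _ hdβ.ne', ← Real.rpow_natCast, ← Real.rpow_add hr.1,
      Nat.cast_sub hd1]
    congr 1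
    push_cast
    ring
  rw [setLIntegral_ball_enorm_norm_of_hasDerivAt hR (fun r hr => Real.rpow_nonneg hr.1 _)
    ((continuousOn_id.rpow_const fun _ _ => Or.inr hdβ.le).div_const _) hasDerivAt_primitive]
  simp only [id, Real.zero_rpow hdβ.ne', zero_div, sub_zero, ← hd]
  congr 1
  ring

theorem setLIntegral_closedBall_enorm_norm_sub_rpow_neg_le {β R : ℝ} (hβ₀ : 0 ≤ β)
    (hβ : β < Module.finrank ℝ E) (hR : 0 < R) (w : E) :
    ∫⁻ x in Metric.closedBall (0 : E) R, ‖‖x - w‖ ^ (-β)‖ₑ ∂μ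
      ≤ ENNReal.ofReal ((Module.finrank ℝ E / (Module.finrank ℝ E - β) + 1)
          * μ.real (Metric.ball 0 1) * R ^ (Module.finrank ℝ E - β)) := by
  refine (setLIntegral_enorm_norm_sub_rpow_neg_le hβ₀ hR _ w).trans_eq ?_
  set d := Module.finrank ℝ E
  have hdβ : 0 < d - β := sub_pos.2 hβ
  have rpow_split : R ^ (d - β) = R ^ (-β) * R ^ d := by
    rw [← Real.rpow_natCast, ← Real.rpow_add hR, neg_add_eq_sub]
  rw [setLIntegral_ball_enorm_norm_rpow_neg hβ hR.le, Measure.addHaar_closedBall μ _ hR.le,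
    ← ofReal_measureReal measure_ball_lt_top.ne, ← ENNReal.ofReal_mul (by positivity),
    ← ENNReal.ofReal_mul (by positivity), ← ENNReal.ofReal_add (by positivity) (by positivity),
    rpow_split]
  congr 1
  ring

end RieszKernel

section WaveKernel

theorem measurable_G (a : ℝ) : Measurable (G a) :=
  Measurable.ite (measurableSet_lt measurable_norm measurable_const) (by fun_prop) measurable_const

theorem hasDerivAt_neg_sqrt_sq_sub_sq {a r : ℝ} (hr : r ∈ Set.Ioo 0 a) :
    HasDerivAt (fun r => -√(a ^ 2 - r ^ 2)) (r / √(a ^ 2 - r ^ 2)) r := by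
  have hpos : 0 < a ^ 2 - r ^ 2 := by nlinarith [hr.1, hr.2]
  have hsub : HasDerivAt (fun r : ℝ => a ^ 2 - r ^ 2) (-(2 * r)) r := by
    simpa using (hasDerivAt_pow 2 r).const_sub (a ^ 2)
  refine (hsub.sqrt hpos.ne').neg.congr_deriv ?_
  field_simp

theorem lintegral_enorm_G (a : ℝ) : ∫⁻ x, ‖G a x‖ₑ = ENNReal.ofReal a := by
  rcases lt_or_ge a 0 with ha | ha
  · have G_eq_zero (x : E2) : G a x = 0 := if_neg (ha.le.trans (norm_nonneg x)).not_gt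
    simp [G_eq_zero, ha.le]
  have G_on_ball : ∀ x ∈ Metric.ball (0 : E2) a,
      ‖G a x‖ₑ = ‖(2 * π * √(a ^ 2 - ‖x‖ ^ 2))⁻¹‖ₑ := fun x hx => by
    rw [G, if_pos (mem_ball_zero_iff.1 hx)]
  have support_subset : Function.support (fun x => ‖G a x‖ₑ) ⊆ Metric.ball (0 : E2) a :=
    fun x hx => by
      by_contra hxa
      exact hx (by simp [G, if_neg (mem_ball_zero_iff.not.1 hxa)])
  have hasDerivAt_primitive : ∀ r ∈ Set.Ioo 0 a, HasDerivAt (fun r => (2 * π)⁻¹ * -√(a ^ 2 - r ^ 2))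
      (r ^ (Module.finrank ℝ E2 - 1) * (2 * π * √(a ^ 2 - r ^ 2))⁻¹) r := fun r hr => by
    refine ((hasDerivAt_neg_sqrt_sq_sub_sq hr).const_mul _).congr_deriv ?_
    rw [finrank_euclideanSpace_fin, pow_one, mul_inv]
    ring
  rw [← setLIntegral_eq_of_support_subset support_subset,
    setLIntegral_congr_fun measurableSet_ball G_on_ball,
    setLIntegral_ball_enorm_norm_of_hasDerivAt (f := fun r => (2 * π * √(a ^ 2 - r ^ 2))⁻¹) ha
      (fun r _ => by positivity) (by fun_prop) hasDerivAt_primitive]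
  congr 1
  simp [Measure.real, pi_nonneg, Real.sqrt_sq ha]
  field_simp

theorem lintegral_enorm_phi_mul_le (t R s : ℝ) {k : E2 → ENNReal} (hk : Measurable k) {K : ENNReal}
    (hK : ∀ w, ∫⁻ x in Metric.closedBall (0 : E2) R, k (x - w) ≤ K) :
    ∫⁻ z, ‖phi t R s z‖ₑ * k z ≤ ENNReal.ofReal (t - s) * K :=
  calc
    _ ≤ ∫⁻ z, (∫⁻ x in Metric.closedBall (0 : E2) R, ‖G (t - s) (x - z)‖ₑ) * k z := by
      gcongr
      exact enorm_integral_le_lintegral_enorm _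
    _ = ∫⁻ w, ‖G (t - s) w‖ₑ * ∫⁻ x in Metric.closedBall (0 : E2) R, k (x - w) :=
      lintegral_lintegral_sub_mul (measurable_G _).enorm hk
    _ ≤ ∫⁻ w, ‖G (t - s) w‖ₑ * K := by
      gcongr with w
      exact hK w
    _ = _ := by rw [lintegral_mul_const _ (measurable_G _).enorm, lintegral_enorm_G]

theorem lintegral_enorm_phi_le (t s : ℝ) {R : ℝ} (hR : 0 ≤ R) :
    ∫⁻ y, ‖phi t R s y‖ₑ ≤ ENNReal.ofReal (t - s) * ENNReal.ofReal (π * R ^ 2) := by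
  have area : volume (Metric.closedBall (0 : E2) R) = ENNReal.ofReal (π * R ^ 2) := by
    rw [EuclideanSpace.volume_closedBall_fin_two, mul_comm, ENNReal.ofReal_mul pi_nonneg,
      ENNReal.ofReal_pow hR]
  simpa only [mul_one] using lintegral_enorm_phi_mul_le t R s (k := fun _ => 1) measurable_const
    fun _ => by rw [setLIntegral_one, area]

theorem lintegral_enorm_phi_mul_rpow_neg_le (t s : ℝ) {β R : ℝ} (hβ₀ : 0 ≤ β) (hβ₂ : β < 2)
    (hR : 0 < R) (y : E2) :
    ∫⁻ z, ‖phi t R s z‖ₑ * ‖‖y - z‖ ^ (-β)‖ₑ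
      ≤ ENNReal.ofReal (t - s) * ENNReal.ofReal ((2 / (2 - β) + 1) * π * R ^ (2 - β)) := by
  refine lintegral_enorm_phi_mul_le t R s (by fun_prop) fun w => ?_
  have riesz := setLIntegral_closedBall_enorm_norm_sub_rpow_neg_le (E := E2) (μ := volume)
    hβ₀ (by simpa using hβ₂) hR (y + w)
  simpa [norm_sub_rev y, sub_sub, add_comm w, Measure.real, pi_nonneg] using riesz

theorem enorm_integral_phi_mul_phi_mul_rpow_neg_le (t₁ t₂ s : ℝ) {β R : ℝ} (hβ₀ : 0 ≤ β)
    (hβ₂ : β < 2) (hR : 0 < R) :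
    ‖∫ y : E2, ∫ z : E2, phi t₁ R s y * phi t₂ R s z * ‖y - z‖ ^ (-β)‖ₑ
      ≤ ENNReal.ofReal (t₁ - s) * ENNReal.ofReal (π * R ^ 2)
        * (ENNReal.ofReal (t₂ - s) * ENNReal.ofReal ((2 / (2 - β) + 1) * π * R ^ (2 - β))) :=
  calc
    _ ≤ ∫⁻ y : E2, ∫⁻ z : E2, ‖phi t₁ R s y * phi t₂ R s z * ‖y - z‖ ^ (-β)‖ₑ :=
      (enorm_integral_le_lintegral_enorm _).trans
        (lintegral_mono fun _ => enorm_integral_le_lintegral_enorm _)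
    _ = ∫⁻ y : E2, ‖phi t₁ R s y‖ₑ * ∫⁻ z : E2, ‖phi t₂ R s z‖ₑ * ‖‖y - z‖ ^ (-β)‖ₑ := by
      simp_rw [← lintegral_const_mul' _ _ enorm_ne_top, enorm_mul, mul_assoc]
    _ ≤ ∫⁻ y : E2, ‖phi t₁ R s y‖ₑ
          * (ENNReal.ofReal (t₂ - s) * ENNReal.ofReal ((2 / (2 - β) + 1) * π * R ^ (2 - β))) := by
      gcongr with y
      exact lintegral_enorm_phi_mul_rpow_neg_le t₂ s hβ₀ hβ₂ hR y
    _ ≤ _ := by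
      rw [lintegral_mul_const' _ _ (by finiteness)]
      gcongr
      exact lintegral_enorm_phi_le t₁ s hR.le

theorem Psi_le {β t₁ t₂ R s : ℝ} (hβ₀ : 0 ≤ β) (hβ₂ : β < 2) (hs₁ : s ≤ t₁) (hs₂ : s ≤ t₂)
    (hR : 0 < R) :
    Psi β t₁ t₂ R s ≤ (2 / (2 - β) + 1) * π ^ 2 * ((t₁ - s) * (t₂ - s)) := by
  have h₁ : 0 ≤ t₁ - s := sub_nonneg.2 hs₁
  have h₂ : 0 ≤ t₂ - s := sub_nonneg.2 hs₂
  have hβ : 0 < 2 - β := sub_pos.2 hβ₂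
  have energy_le : ∫ y : E2, ∫ z : E2, phi t₁ R s y * phi t₂ R s z * ‖y - z‖ ^ (-β)
      ≤ (t₁ - s) * (π * R ^ 2) * ((t₂ - s) * ((2 / (2 - β) + 1) * π * R ^ (2 - β))) := by
    have h := enorm_integral_phi_mul_phi_mul_rpow_neg_le t₁ t₂ s hβ₀ hβ₂ hR
    rw [← ENNReal.ofReal_mul h₁, ← ENNReal.ofReal_mul h₂, ← ENNReal.ofReal_mul (by positivity),
      ← ofReal_norm, ENNReal.ofReal_le_ofReal_iff (by positivity)] at h
    exact (le_abs_self _).trans h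
  have scaling : R ^ (β - 4) * (R ^ 2 * R ^ (2 - β)) = 1 := by
    rw [← Real.rpow_two, ← Real.rpow_add hR, ← Real.rpow_add hR,
      show β - 4 + (2 + (2 - β)) = 0 by ring, Real.rpow_zero]
  calc
    Psi β t₁ t₂ R s ≤ R ^ (β - 4)
        * ((t₁ - s) * (π * R ^ 2) * ((t₂ - s) * ((2 / (2 - β) + 1) * π * R ^ (2 - β)))) := by
      unfold Psi
      gcongr
    _ = R ^ (β - 4) * (R ^ 2 * R ^ (2 - β))
        * ((2 / (2 - β) + 1) * π ^ 2 * ((t₁ - s) * (t₂ - s))) := by ring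
    _ = _ := by rw [scaling, one_mul]

end WaveKernel

/-- For `β ∈ (0,2)` and `t₁, t₂ > 0`, `Ψ_R(t₁,t₂;s)` is uniformly bounded
over `s ∈ [0, min(t₁,t₂)]` and `R > 0`. -/
theorem stmt_3 (β t₁ t₂ : ℝ) (hβ0 : 0 < β) (hβ2 : β < 2) (ht₁ : 0 < t₁) (ht₂ : 0 < t₂) :
    ∃ C : ℝ, ∀ s R : ℝ, s ∈ Set.Icc 0 (min t₁ t₂) → 0 < R →
      Psi β t₁ t₂ R s ≤ C := by
  refine ⟨(2 / (2 - β) + 1) * π ^ 2 * (t₁ * t₂), fun s R ⟨hs₀, hs⟩ hR => ?_⟩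
  obtain ⟨hs₁, hs₂⟩ := le_min_iff.1 hs
  have hβ : 0 < 2 - β := sub_pos.2 hβ2
  have h₂ : 0 ≤ t₂ - s := sub_nonneg.2 hs₂
  refine (Psi_le hβ0.le hβ2 hs₁ hs₂ hR).trans ?_
  gcongr <;> exact sub_le_self _ hs₀
end
end

section
/- For every β ∈ (0,2), (2π)² c_β κ_β = ∫_{B₁×B₁} ‖y−z‖^{−β} dy dz, where B₁ is the closed unit ball in ℝ²; in particular κ_β = ∫_{ℝ²} ‖ξ‖^{β−4} J₁(‖ξ‖)² dξ is finite. -/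
/-!
Both `‖x‖ ^ (-s)` and `‖ξ‖ ^ (s - d)` are superpositions of Gaussians (Gamma integrals). For a
finite measure `μ` on a `d`-dimensional Euclidean space, Fubini and the Fourier transform of a
Gaussian turn `∬ exp (-‖x - y‖² / 4t) dμ dμ` into a multiple of
`t ^ (d / 2) ∫ exp (-t ‖ξ‖²) ‖μ̂ ξ‖² dξ`. Integrating this against `t ^ (-s / 2 - 1) dt` and using
Tonelli expresses the Riesz energy of `μ` through `∫ ‖ξ‖ ^ (s - d) ‖μ̂ ξ‖² dξ`, as an identity in
`[0, ∞]` that needs no distributional Fourier transform of the Riesz kernel.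

For the unit disc, projecting to an axis gives the semicircle density `2 √(1 - u²)`, and `u = cos θ`
shows `μ̂ ξ = 2π J₁(‖ξ‖) / ‖ξ‖`. The energy is finite because `s < d`, hence so is `κ_β`.
-/

open MeasureTheory Real

noncomputable section

/-- The Bessel function of the first kind of order one:
`J₁(x) = (x/π) ∫₀^π sin²θ cos(x cos θ) dθ`. -/
def J1 (x : ℝ) : ℝ :=
  x / π * ∫ θ in (0:ℝ)..π, Real.sin θ ^ 2 * Real.cos (x * Real.cos θ)

/-- `c_β = Γ(1-β/2)/(π 4^{β/2} Γ(β/2))`. -/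
def cBeta (β : ℝ) : ℝ :=
  Real.Gamma (1 - β / 2) / (π * (4 : ℝ) ^ (β / 2) * Real.Gamma (β / 2))

/-- `κ_β = ∫_{ℝ²} ‖ξ‖^{β-4} J₁(‖ξ‖)² dξ`. -/
def kappaBeta (β : ℝ) : ℝ :=
  ∫ ξ : E2, ‖ξ‖ ^ (β - 4) * (J1 ‖ξ‖) ^ 2

open Set Module Metric
open scoped ENNReal InnerProductSpace

/-! ### Gamma integrals -/

lemma lintegral_comp_inv_Ioi (f : ℝ → ℝ≥0∞) :
    ∫⁻ t in Ioi (0 : ℝ), ENNReal.ofReal (t ^ (-2 : ℝ)) * f t⁻¹ = ∫⁻ t in Ioi (0 : ℝ), f t := by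
  have hderiv (t : ℝ) (ht : t ∈ Ioi (0 : ℝ)) :
      HasDerivWithinAt Inv.inv (-(t ^ 2)⁻¹) (Ioi 0) t :=
    (hasDerivAt_inv (ne_of_gt ht)).hasDerivWithinAt
  have himage : Inv.inv '' Ioi (0 : ℝ) = Ioi 0 := by
    ext t; simp
  conv_rhs => rw [← himage,
    lintegral_image_eq_lintegral_abs_deriv_mul measurableSet_Ioi hderiv inv_injective.injOn]
  refine setLIntegral_congr_fun measurableSet_Ioi fun t ht => ?_
  rw [abs_neg, abs_of_nonneg (by positivity), rpow_neg (le_of_lt ht), rpow_two]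

lemma lintegral_rpow_mul_exp_neg_mul_Ioi {a r : ℝ} (ha : 0 < a) (hr : 0 ≤ r) :
    ∫⁻ t in Ioi (0 : ℝ), ENNReal.ofReal (t ^ (a - 1)) * ENNReal.ofReal (rexp (-(r * t))) =
      ENNReal.ofReal (Gamma a) * ENNReal.ofReal r ^ (-a) := by
  have hΓ : 0 < Gamma a := Gamma_pos_of_pos ha
  rcases hr.eq_or_lt with rfl | hr
  · have hdiv : ∫⁻ t in Ioi (0 : ℝ), ENNReal.ofReal (t ^ (a - 1)) = ∞ := by
      by_contra h
      refine not_integrableOn_Ioi_rpow (a - 1) ⟨by fun_prop, ?_⟩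
      rwa [hasFiniteIntegral_iff_ofReal, lt_top_iff_ne_top]
      filter_upwards [ae_restrict_mem measurableSet_Ioi] with t ht using rpow_nonneg (le_of_lt ht) _
    simp [hdiv, ha, hΓ]
  · have hint : IntegrableOn (fun t => t ^ (a - 1) * rexp (-(r * t))) (Ioi 0) := by
      refine Integrable.of_integral_ne_zero ?_
      rw [integral_rpow_mul_exp_neg_mul_Ioi ha hr]
      positivity
    calc _ = ∫⁻ t in Ioi (0 : ℝ), ENNReal.ofReal (t ^ (a - 1) * rexp (-(r * t))) :=
          setLIntegral_congr_fun measurableSet_Ioi fun t ht =>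
            (ENNReal.ofReal_mul (rpow_nonneg (le_of_lt ht) _)).symm
      _ = ENNReal.ofReal ((1 / r) ^ a * Gamma a) := by
          rw [← integral_rpow_mul_exp_neg_mul_Ioi ha hr, ofReal_integral_eq_lintegral_ofReal hint]
          filter_upwards [ae_restrict_mem measurableSet_Ioi] with t ht
          exact mul_nonneg (rpow_nonneg (le_of_lt ht) _) (exp_pos _).le
      _ = _ := by
          rw [ENNReal.ofReal_rpow_of_pos hr, mul_comm, ENNReal.ofReal_mul hΓ.le, one_div,
            inv_rpow hr.le, rpow_neg hr.le]

lemma lintegral_rpow_mul_exp_neg_div_Ioi {a r : ℝ} (ha : 0 < a) (hr : 0 ≤ r) :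
    ∫⁻ t in Ioi (0 : ℝ), ENNReal.ofReal (t ^ (-a - 1)) * ENNReal.ofReal (rexp (-(r / t))) =
      ENNReal.ofReal (Gamma a) * ENNReal.ofReal r ^ (-a) := by
  rw [← lintegral_rpow_mul_exp_neg_mul_Ioi ha hr,
    ← lintegral_comp_inv_Ioi
      fun t => ENNReal.ofReal (t ^ (a - 1)) * ENNReal.ofReal (rexp (-(r * t)))]
  refine setLIntegral_congr_fun measurableSet_Ioi fun t (ht : 0 < t) => ?_
  rw [← mul_assoc, ← ENNReal.ofReal_mul (rpow_nonneg ht.le (-2)), inv_rpow ht.le, ← rpow_neg ht.le,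
    ← rpow_add ht, div_eq_mul_inv]
  ring_nf

section RieszKernel

variable {V : Type*} [SeminormedAddCommGroup V]

lemma ofReal_sq_norm_rpow (x : V) (a : ℝ) :
    ENNReal.ofReal (‖x‖ ^ 2) ^ (-(a / 2)) = ‖x‖ₑ ^ (-a) := by
  rw [ENNReal.ofReal_pow (norm_nonneg _), ofReal_norm, ← ENNReal.rpow_natCast, ← ENNReal.rpow_mul]
  congr 1
  push_cast
  ring

lemma lintegral_rpow_mul_exp_neg_mul_sq_norm {a : ℝ} (ha : 0 < a) (x : V) :
    ∫⁻ t in Ioi (0 : ℝ), ENNReal.ofReal (t ^ (a / 2 - 1)) *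
        ENNReal.ofReal (rexp (-(t * ‖x‖ ^ 2))) =
      ENNReal.ofReal (Gamma (a / 2)) * ‖x‖ₑ ^ (-a) := by
  simp_rw [mul_comm _ (‖x‖ ^ 2)]
  rw [lintegral_rpow_mul_exp_neg_mul_Ioi (half_pos ha) (by positivity), ofReal_sq_norm_rpow]

lemma lintegral_rpow_mul_exp_neg_sq_norm_div {a : ℝ} (ha : 0 < a) (x : V) :
    ∫⁻ t in Ioi (0 : ℝ), ENNReal.ofReal (t ^ (-(a / 2) - 1)) *
        ENNReal.ofReal (rexp (-(‖x‖ ^ 2 / (4 * t)))) =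
      ENNReal.ofReal (4 ^ (a / 2) * Gamma (a / 2)) * ‖x‖ₑ ^ (-a) := by
  have hΓ : 0 < Gamma (a / 2) := Gamma_pos_of_pos (half_pos ha)
  have hscale : ENNReal.ofReal (‖x‖ ^ 2 / 4) ^ (-(a / 2)) =
      ENNReal.ofReal (4 ^ (a / 2)) * ‖x‖ₑ ^ (-a) := by
    rw [div_eq_inv_mul, ENNReal.ofReal_mul (by positivity),
      ENNReal.mul_rpow_of_ne_top ENNReal.ofReal_ne_top ENNReal.ofReal_ne_top,
      ofReal_sq_norm_rpow, ENNReal.ofReal_rpow_of_pos (by positivity), inv_rpow zero_le_four,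
      ← rpow_neg zero_le_four, neg_neg]
  simp_rw [← div_div]
  rw [lintegral_rpow_mul_exp_neg_div_Ioi (half_pos ha) (by positivity), hscale, ← mul_assoc,
    ← ENNReal.ofReal_mul hΓ.le, mul_comm (Gamma _)]

lemma lintegral_rpow_mul_lintegral_exp_neg_mul_sq_norm [MeasurableSpace V]
    [OpensMeasurableSpace V] {μ : Measure V} [SFinite μ] {a : ℝ} (ha : 0 < a)
    {g : V → ℝ≥0∞} (hg : Measurable g) :
    ∫⁻ t in Ioi (0 : ℝ), ENNReal.ofReal (t ^ (a / 2 - 1)) *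
        ∫⁻ x, ENNReal.ofReal (rexp (-(t * ‖x‖ ^ 2))) * g x ∂μ =
      ENNReal.ofReal (Gamma (a / 2)) * ∫⁻ x, ‖x‖ₑ ^ (-a) * g x ∂μ := by
  calc _ = ∫⁻ t in Ioi (0 : ℝ), ∫⁻ x, ENNReal.ofReal (t ^ (a / 2 - 1)) *
          ENNReal.ofReal (rexp (-(t * ‖x‖ ^ 2))) * g x ∂μ := by
        refine lintegral_congr fun t => ?_
        simp_rw [mul_assoc]
        rw [lintegral_const_mul _ (by fun_prop)]
    _ = ∫⁻ x, (∫⁻ t in Ioi (0 : ℝ), ENNReal.ofReal (t ^ (a / 2 - 1)) *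
          ENNReal.ofReal (rexp (-(t * ‖x‖ ^ 2)))) * g x ∂μ := by
        rw [lintegral_lintegral_swap (by unfold Function.uncurry; fun_prop)]
        exact lintegral_congr fun x => lintegral_mul_const _ (by fun_prop)
    _ = _ := by
        simp_rw [lintegral_rpow_mul_exp_neg_mul_sq_norm ha, mul_assoc]
        rw [lintegral_const_mul _ (by fun_prop)]

end RieszKernel

/-! ### Riesz energies and characteristic functions -/

section Energy

variable {V : Type*} [NormedAddCommGroup V] [MeasurableSpace V]

/-- The Riesz `s`-energy `∬ ‖x - y‖ ^ (-s) dμ(x) dμ(y)` of a measure. The kernel is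
`ℝ≥0∞`-valued, so that for `0 < s` it equals `∞` on the diagonal, where the real power
would be `0`. -/
def rieszEnergy (s : ℝ) (μ : Measure V) : ℝ≥0∞ :=
  ∫⁻ p, ‖p.1 - p.2‖ₑ ^ (-s) ∂(μ.prod μ)

variable [BorelSpace V] [SecondCountableTopology V]

lemma ofReal_mul_rieszEnergy_eq_lintegral (μ : Measure V) [SFinite μ] {s : ℝ} (hs : 0 < s) :
    ENNReal.ofReal (4 ^ (s / 2) * Gamma (s / 2)) * rieszEnergy s μ =
      ∫⁻ t in Ioi (0 : ℝ), ENNReal.ofReal (t ^ (-(s / 2) - 1)) *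
        ∫⁻ p, ENNReal.ofReal (rexp (-(‖p.1 - p.2‖ ^ 2 / (4 * t)))) ∂(μ.prod μ) := by
  rw [rieszEnergy, ← lintegral_const_mul _ (by fun_prop)]
  simp_rw [← lintegral_rpow_mul_exp_neg_sq_norm_div hs]
  rw [lintegral_lintegral_swap (by unfold Function.uncurry; fun_prop)]
  exact lintegral_congr fun t => lintegral_const_mul _ (by fun_prop)

lemma integral_integral_norm_sub_rpow_neg (μ : Measure V) [SFinite μ] [NullSingletonClass μ] {s : ℝ}
    (hfin : rieszEnergy s μ < ∞) :
    ∫ x, ∫ y, ‖x - y‖ ^ (-s) ∂μ ∂μ = (rieszEnergy s μ).toReal := by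
  have hprod : rieszEnergy s μ = ∫⁻ x, ∫⁻ y, ‖x - y‖ₑ ^ (-s) ∂μ ∂μ :=
    lintegral_prod _ (by fun_prop)
  have hinner (x : V) : ∫ y, ‖x - y‖ ^ (-s) ∂μ = (∫⁻ y, ‖x - y‖ₑ ^ (-s) ∂μ).toReal := by
    rw [integral_eq_lintegral_of_nonneg_ae (ae_of_all _ fun y => rpow_nonneg (norm_nonneg _) _)
      (Measurable.aestronglyMeasurable (by fun_prop))]
    congr 1
    refine lintegral_congr_ae ?_
    filter_upwards [Measure.ae_ne μ x] with y hy
    rw [← ENNReal.ofReal_rpow_of_pos (norm_pos_iff.2 (sub_ne_zero.2 hy.symm)), ofReal_norm]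
  have hmeas : Measurable fun x : V => ∫⁻ y, ‖x - y‖ₑ ^ (-s) ∂μ :=
    Measurable.lintegral_prod_right (by fun_prop)
  simp_rw [hinner]
  rw [integral_toReal hmeas.aemeasurable (ae_lt_top hmeas (hprod ▸ hfin.ne)), hprod]

end Energy

section Finiteness

variable {V : Type*} [NormedAddCommGroup V] [NormedSpace ℝ V] [FiniteDimensional ℝ V]
  [Nontrivial V] [MeasurableSpace V] [BorelSpace V] (μ : Measure V) [μ.IsAddHaarMeasure]

lemma setLIntegral_enorm_rpow_neg_closedBall_lt_top {s : ℝ} (hsV : s < finrank ℝ V) (r : ℝ) :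
    ∫⁻ x in closedBall (0 : V) r, ‖x‖ₑ ^ (-s) ∂μ < ∞ := by
  have hloc : LocallyIntegrable (fun x : V => ‖x‖ ^ (-s)) μ := by
    refine locallyIntegrable_of_norm_le_rpow (C := 1) finrank_pos hsV (ae_of_all _ fun x => ?_)
      (Measurable.aestronglyMeasurable (by fun_prop))
    rw [norm_of_nonneg (rpow_nonneg (norm_nonneg x) _), one_mul]
  calc ∫⁻ x in closedBall (0 : V) r, ‖x‖ₑ ^ (-s) ∂μ
      = ∫⁻ x in closedBall (0 : V) r, ENNReal.ofReal (‖x‖ ^ (-s)) ∂μ := by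
        refine lintegral_congr_ae ?_
        filter_upwards [Measure.ae_ne _ (0 : V)] with x hx
        rw [← ENNReal.ofReal_rpow_of_pos (norm_pos_iff.2 hx), ofReal_norm]
    _ < ∞ := (hloc.integrableOn_isCompact (isCompact_closedBall 0 r)).setLIntegral_lt_top

lemma rieszEnergy_restrict_lt_top {s : ℝ} (hsV : s < finrank ℝ V) {A : Set V}
    (hA : Bornology.IsBounded A) : rieszEnergy s (μ.restrict A) < ∞ := by
  obtain ⟨r, hr⟩ := hA.subset_closedBall 0
  calc rieszEnergy s (μ.restrict A)
      = ∫⁻ x in A, ∫⁻ y in A, ‖x - y‖ₑ ^ (-s) ∂μ ∂μ := lintegral_prod _ (by fun_prop)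
    _ ≤ ∫⁻ _ in A, ∫⁻ z in closedBall (0 : V) (2 * r), ‖z‖ₑ ^ (-s) ∂μ ∂μ := by
        refine setLIntegral_mono measurable_const fun x hx => ?_
        have hsub : A ⊆ (x - ·) ⁻¹' closedBall 0 (2 * r) := fun y hy => by
          have hxr : ‖x‖ ≤ r := mem_closedBall_zero_iff.1 (hr hx)
          have hyr : ‖y‖ ≤ r := mem_closedBall_zero_iff.1 (hr hy)
          exact mem_closedBall_zero_iff.2 (by linarith [norm_sub_le x y])
        refine (lintegral_mono_set hsub).trans_eq ?_
        exact (Measure.measurePreserving_sub_left μ x).setLIntegral_comp_preimage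
          (f := fun z : V => ‖z‖ₑ ^ (-s)) measurableSet_closedBall (by fun_prop)
    _ < ∞ := by
        rw [setLIntegral_const]
        exact ENNReal.mul_lt_top (setLIntegral_enorm_rpow_neg_closedBall_lt_top μ hsV _)
          hA.measure_lt_top

end Finiteness

section CharFun

variable {V : Type*} [NormedAddCommGroup V] [InnerProductSpace ℝ V] [MeasurableSpace V]

lemma integral_prod_cexp_inner_sub_mul_I (μ : Measure V) [SFinite μ] (ξ : V) :
    ∫ p, Complex.exp (⟪p.1 - p.2, ξ⟫_ℝ * Complex.I) ∂(μ.prod μ) = (‖charFun μ ξ‖ ^ 2 : ℝ) := by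
  have hconj : charFun μ (-ξ) * charFun μ ξ = (‖charFun μ ξ‖ ^ 2 : ℝ) := by
    rw [charFun_neg, Complex.conj_mul']
    push_cast
    rfl
  rw [← hconj, mul_comm, charFun, charFun, ← integral_prod_mul]
  congr with p
  rw [← Complex.exp_add, inner_sub_left, inner_neg_right]
  push_cast
  ring_nf

variable [FiniteDimensional ℝ V] [BorelSpace V]

lemma integral_cexp_neg_mul_sq_norm_mul_cexp_inner_mul_I {b : ℝ} (hb : 0 < b) (x : V) :
    ∫ ξ : V, (rexp (-(b * ‖ξ‖ ^ 2)) : ℂ) * Complex.exp (⟪x, ξ⟫_ℝ * Complex.I) =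
      ((π / b) ^ (finrank ℝ V / 2 : ℝ) * rexp (-(‖x‖ ^ 2 / (4 * b))) : ℝ) := by
  have h := GaussianFourier.integral_cexp_neg_mul_sq_norm_add
    (show 0 < (b : ℂ).re from hb) Complex.I x
  calc _ = ∫ ξ : V, Complex.exp (-b * ‖ξ‖ ^ 2 + Complex.I * ⟪x, ξ⟫_ℝ) := by
        congr with ξ
        rw [Complex.ofReal_exp, ← Complex.exp_add]
        push_cast
        ring_nf
    _ = _ := by
        rw [h, Complex.I_sq]
        push_cast
        rw [Complex.ofReal_cpow (by positivity)]
        push_cast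
        ring_nf

lemma integrable_exp_neg_mul_sq_norm {b : ℝ} (hb : 0 < b) :
    Integrable fun x : V => rexp (-(b * ‖x‖ ^ 2)) := by
  refine Integrable.of_integral_ne_zero ?_
  simp_rw [← neg_mul]
  rw [GaussianFourier.integral_rexp_neg_mul_sq_norm hb]
  positivity

lemma integral_exp_neg_mul_sq_norm_mul_charFun_sq (μ : Measure V) [IsFiniteMeasure μ] {b : ℝ}
    (hb : 0 < b) :
    ∫ ξ : V, rexp (-(b * ‖ξ‖ ^ 2)) * ‖charFun μ ξ‖ ^ 2 =
      (π / b) ^ (finrank ℝ V / 2 : ℝ) *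
        ∫ p, rexp (-(‖p.1 - p.2‖ ^ 2 / (4 * b))) ∂(μ.prod μ) := by
  have hG : Integrable fun ξ : V => (rexp (-(b * ‖ξ‖ ^ 2)) : ℂ) :=
    (integrable_exp_neg_mul_sq_norm hb).ofReal
  have hint : Integrable (Function.uncurry fun (ξ : V) (p : V × V) =>
      (rexp (-(b * ‖ξ‖ ^ 2)) : ℂ) * Complex.exp (⟪p.1 - p.2, ξ⟫_ℝ * Complex.I))
      (volume.prod (μ.prod μ)) := by
    refine (hG.comp_fst (μ.prod μ)).mul_bdd (c := 1) ?_ (ae_of_all _ fun q => ?_)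
    · exact Continuous.aestronglyMeasurable (by fun_prop)
    · rw [Complex.norm_exp_ofReal_mul_I]
  apply Complex.ofReal_injective
  calc (↑(∫ ξ : V, rexp (-(b * ‖ξ‖ ^ 2)) * ‖charFun μ ξ‖ ^ 2) : ℂ)
      = ∫ ξ : V, ∫ p, (rexp (-(b * ‖ξ‖ ^ 2)) : ℂ) *
          Complex.exp (⟪p.1 - p.2, ξ⟫_ℝ * Complex.I) ∂(μ.prod μ) := by
        simp_rw [integral_const_mul, integral_prod_cexp_inner_sub_mul_I, ← Complex.ofReal_mul]
        exact integral_ofReal.symm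
    _ = ∫ p, ∫ ξ : V, (rexp (-(b * ‖ξ‖ ^ 2)) : ℂ) *
          Complex.exp (⟪p.1 - p.2, ξ⟫_ℝ * Complex.I) ∂volume ∂(μ.prod μ) :=
        integral_integral_swap hint
    _ = _ := by
        simp_rw [integral_cexp_neg_mul_sq_norm_mul_cexp_inner_mul_I hb]
        rw [← integral_const_mul]
        exact integral_ofReal

lemma lintegral_exp_neg_norm_sub_sq (μ : Measure V) [IsFiniteMeasure μ] {b : ℝ} (hb : 0 < b) :
    ∫⁻ p, ENNReal.ofReal (rexp (-(‖p.1 - p.2‖ ^ 2 / (4 * b)))) ∂(μ.prod μ) =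
      ENNReal.ofReal ((b / π) ^ (finrank ℝ V / 2 : ℝ)) *
        ∫⁻ ξ : V, ENNReal.ofReal (rexp (-(b * ‖ξ‖ ^ 2))) * ‖charFun μ ξ‖ₑ ^ 2 := by
  have hspace : Integrable (fun p : V × V => rexp (-(‖p.1 - p.2‖ ^ 2 / (4 * b)))) (μ.prod μ) := by
    refine Integrable.of_bound (Continuous.aestronglyMeasurable (by fun_prop)) 1
      (ae_of_all _ fun p => ?_)
    rw [Real.norm_eq_abs, abs_exp, exp_le_one_iff, neg_nonpos]
    positivity
  have hfreq : Integrable fun ξ : V => rexp (-(b * ‖ξ‖ ^ 2)) * ‖charFun μ ξ‖ ^ 2 := by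
    refine (integrable_exp_neg_mul_sq_norm hb).mul_bdd (c := μ.real univ ^ 2)
      (by fun_prop) (ae_of_all _ fun ξ => ?_)
    rw [norm_pow, norm_norm]
    gcongr
    exact norm_charFun_le ξ
  have hconst : (b / π) ^ (finrank ℝ V / 2 : ℝ) * (π / b) ^ (finrank ℝ V / 2 : ℝ) = 1 := by
    rw [← mul_rpow (by positivity) (by positivity), div_mul_div_cancel₀ pi_ne_zero,
      div_self hb.ne', one_rpow]
  have hofReal (ξ : V) : ENNReal.ofReal (rexp (-(b * ‖ξ‖ ^ 2))) * ‖charFun μ ξ‖ₑ ^ 2 =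
      ENNReal.ofReal (rexp (-(b * ‖ξ‖ ^ 2)) * ‖charFun μ ξ‖ ^ 2) := by
    rw [ENNReal.ofReal_mul (exp_pos _).le, ENNReal.ofReal_pow (norm_nonneg _), ofReal_norm]
  simp_rw [hofReal]
  rw [← ofReal_integral_eq_lintegral_ofReal hspace (ae_of_all _ fun p => (exp_pos _).le),
    ← ofReal_integral_eq_lintegral_ofReal hfreq
      (ae_of_all _ fun ξ => mul_nonneg (exp_pos _).le (sq_nonneg _)),
    ← ENNReal.ofReal_mul (by positivity), integral_exp_neg_mul_sq_norm_mul_charFun_sq μ hb,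
    ← mul_assoc, hconst, one_mul]

theorem rieszEnergy_eq_lintegral_charFun (μ : Measure V) [IsFiniteMeasure μ] {s : ℝ}
    (hs : 0 < s) (hsV : s < finrank ℝ V) :
    rieszEnergy s μ =
      ENNReal.ofReal (Gamma ((finrank ℝ V - s) / 2) /
        (π ^ (finrank ℝ V / 2 : ℝ) * 4 ^ (s / 2) * Gamma (s / 2))) *
      ∫⁻ ξ : V, ‖ξ‖ₑ ^ (s - finrank ℝ V) * ‖charFun μ ξ‖ₑ ^ 2 := by
  set d := (finrank ℝ V : ℝ)
  have hweight (t : ℝ) (ht : 0 < t) :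
      t ^ (-(s / 2) - 1) * (t / π) ^ (d / 2) = (π ^ (d / 2))⁻¹ * t ^ ((d - s) / 2 - 1) := by
    rw [div_rpow ht.le pi_pos.le, ← mul_div_assoc, ← rpow_add ht, div_eq_inv_mul]
    ring_nf
  have henergy : ENNReal.ofReal (4 ^ (s / 2) * Gamma (s / 2)) * rieszEnergy s μ =
      ENNReal.ofReal ((π ^ (d / 2))⁻¹ * Gamma ((d - s) / 2)) *
        ∫⁻ ξ : V, ‖ξ‖ₑ ^ (s - d) * ‖charFun μ ξ‖ₑ ^ 2 := by
    calc _ = ∫⁻ t in Ioi (0 : ℝ), ENNReal.ofReal (π ^ (d / 2))⁻¹ *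
            (ENNReal.ofReal (t ^ ((d - s) / 2 - 1)) *
              ∫⁻ ξ : V, ENNReal.ofReal (rexp (-(t * ‖ξ‖ ^ 2))) * ‖charFun μ ξ‖ₑ ^ 2) := by
          rw [ofReal_mul_rieszEnergy_eq_lintegral μ hs]
          refine setLIntegral_congr_fun measurableSet_Ioi fun t (ht : 0 < t) => ?_
          rw [lintegral_exp_neg_norm_sub_sq μ ht, ← mul_assoc, ← mul_assoc,
            ← ENNReal.ofReal_mul (by positivity), ← ENNReal.ofReal_mul (by positivity),
            hweight t ht]
      _ = _ := by
          rw [lintegral_const_mul' _ _ ENNReal.ofReal_ne_top,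
            lintegral_rpow_mul_lintegral_exp_neg_mul_sq_norm (sub_pos.2 hsV) (by fun_prop), neg_sub,
            ← mul_assoc, ← ENNReal.ofReal_mul (by positivity)]
  have hconst : 0 < 4 ^ (s / 2) * Gamma (s / 2) := by positivity
  rw [← ENNReal.mul_right_inj (ENNReal.ofReal_pos.2 hconst).ne' ENNReal.ofReal_ne_top, henergy,
    ← mul_assoc, ← ENNReal.ofReal_mul hconst.le]
  congr 2
  field_simp

end CharFun

/-! ### The characteristic function of the unit disc -/

section Rotation

variable {V : Type*} [NormedAddCommGroup V] [InnerProductSpace ℝ V] [MeasurableSpace V]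
  [BorelSpace V]

lemma charFun_eq_of_norm_eq {μ : Measure V} (hμ : ∀ R : V ≃ₗᵢ[ℝ] V, MeasurePreserving R μ μ)
    {ξ η : V} (h : ‖ξ‖ = ‖η‖) : charFun μ ξ = charFun μ η := by
  set R : V ≃ₗᵢ[ℝ] V := (ℝ ∙ (ξ - η))ᗮ.reflection
  have hR : R ξ = η := Submodule.reflection_sub h
  have hcomp := (hμ R).integral_comp R.toHomeomorph.measurableEmbedding
    fun x => Complex.exp (⟪x, R ξ⟫_ℝ * Complex.I)
  simp only [LinearIsometryEquiv.inner_map_map] at hcomp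
  rw [← hR]
  exact hcomp

lemma charFun_eq_integral_cos {μ : Measure V} [IsFiniteMeasure μ] {ξ : V}
    (heven : charFun μ (-ξ) = charFun μ ξ) :
    charFun μ ξ = ∫ x, Real.cos ⟪x, ξ⟫_ℝ ∂μ := by
  have hreal : (starRingEnd ℂ) (charFun μ ξ) = charFun μ ξ := by
    rw [← charFun_neg, heven]
  have hint : Integrable (fun x => Complex.exp (⟪x, ξ⟫_ℝ * Complex.I)) μ :=
    Integrable.of_bound (Continuous.aestronglyMeasurable (by fun_prop)) 1
      (ae_of_all _ fun x => (Complex.norm_exp_ofReal_mul_I _).le)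
  rw [← Complex.conj_eq_iff_re.1 hreal, charFun_apply]
  congr 1
  refine (integral_re hint).symm.trans ?_
  simp only [RCLike.re_eq_complex_re, Complex.exp_ofReal_mul_I_re]

lemma measurePreserving_restrict_closedBall [FiniteDimensional ℝ V] (R : V ≃ₗᵢ[ℝ] V) (r : ℝ) :
    MeasurePreserving R (volume.restrict (closedBall 0 r)) (volume.restrict (closedBall 0 r)) := by
  have h := R.measurePreserving.restrict_preimage (measurableSet_closedBall (x := (0 : V)) (ε := r))
  rwa [R.preimage_closedBall, map_zero] at h

end Rotation

instance isFiniteMeasure_restrict_closedBall {X : Type*} [PseudoMetricSpace X] [ProperSpace X]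
    [MeasurableSpace X] {μ : Measure X} [IsFiniteMeasureOnCompacts μ] (x : X) (r : ℝ) :
    IsFiniteMeasure (μ.restrict (closedBall x r)) :=
  isFiniteMeasure_restrict.2 measure_closedBall_lt_top.ne

lemma volume_setOf_sq_le (c : ℝ) : volume {v : ℝ | v ^ 2 ≤ c} = ENNReal.ofReal (2 * √c) := by
  rcases le_or_gt 0 c with hc | hc
  · have hIcc : {v : ℝ | v ^ 2 ≤ c} = Icc (-√c) (√c) := by
      ext v
      exact Real.sq_le hc
    rw [hIcc, Real.volume_Icc, sub_neg_eq_add, two_mul]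
  · have hempty : {v : ℝ | v ^ 2 ≤ c} = ∅ :=
      eq_empty_of_forall_notMem fun v hv => (hc.trans_le (sq_nonneg v)).not_ge hv
    rw [hempty, measure_empty, Real.sqrt_eq_zero_of_nonpos hc.le, mul_zero, ENNReal.ofReal_zero]

lemma map_apply_zero_restrict_closedBall :
    (volume.restrict (closedBall (0 : E2) 1)).map (fun x => x 0) =
      volume.withDensity fun u => ENNReal.ofReal (2 * √(1 - u ^ 2)) := by
  have hcoord : MeasurePreserving (fun x : E2 => ((x 0, x 1) : ℝ × ℝ)) volume volume :=
    (volume_preserving_finTwoArrow ℝ).comp (PiLp.volume_preserving_ofLp (Fin 2))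
  have heval : Measurable fun x : E2 => x 0 := by fun_prop
  ext s hs
  set D : Set (ℝ × ℝ) := {p | p.1 ∈ s ∧ p.2 ^ 2 ≤ 1 - p.1 ^ 2} with hD
  have hDmeas : MeasurableSet D :=
    (measurable_fst hs).inter (measurableSet_le
      (f := fun p : ℝ × ℝ => p.2 ^ 2) (g := fun p => 1 - p.1 ^ 2) (by fun_prop) (by fun_prop))
  have hpre : (fun x : E2 => x 0) ⁻¹' s ∩ closedBall 0 1 = (fun x : E2 => (x 0, x 1)) ⁻¹' D := by
    ext x
    simp [hD, EuclideanSpace.norm_eq, Fin.sum_univ_two, Real.sqrt_le_one, le_sub_iff_add_le']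
  rw [Measure.map_apply heval hs, Measure.restrict_apply (heval hs), hpre,
    hcoord.measure_preimage hDmeas.nullMeasurableSet, Measure.volume_eq_prod,
    Measure.prod_apply hDmeas, withDensity_apply _ hs, ← lintegral_indicator hs]
  refine lintegral_congr fun u => ?_
  by_cases hu : u ∈ s
  · simp [hD, hu, volume_setOf_sq_le]
  · simp [hD, hu]

lemma integral_two_mul_sqrt_one_sub_sq_mul (f : ℝ → ℝ) :
    ∫ u, 2 * √(1 - u ^ 2) * f u = 2 * ∫ θ in 0..π, Real.sin θ ^ 2 * f (Real.cos θ) := by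
  have hsupp (u : ℝ) (hu : u ∉ Icc (-1) 1) : 2 * √(1 - u ^ 2) * f u = 0 := by
    have : 1 - u ^ 2 ≤ 0 := by
      rw [mem_Icc, ← abs_le, ← sq_le_one_iff_abs_le_one] at hu
      linarith
    rw [Real.sqrt_eq_zero_of_nonpos this, mul_zero, zero_mul]
  rw [← setIntegral_eq_integral_of_forall_compl_eq_zero hsupp, ← Real.bijOn_cos.image_eq,
    integral_image_eq_integral_abs_deriv_smul measurableSet_Icc
      (fun θ _ => (Real.hasDerivAt_cos θ).hasDerivWithinAt) Real.injOn_cos,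
    intervalIntegral.integral_of_le pi_pos.le, ← integral_Icc_eq_integral_Ioc, ← integral_const_mul]
  refine setIntegral_congr_fun measurableSet_Icc fun θ hθ => ?_
  have hsin : 0 ≤ Real.sin θ := Real.sin_nonneg_of_mem_Icc hθ
  simp only [smul_eq_mul, abs_neg, abs_of_nonneg hsin, ← Real.sin_sq, Real.sqrt_sq hsin]
  ring

lemma setIntegral_closedBall_comp_apply_zero {f : ℝ → ℝ} (hf : Measurable f) :
    ∫ x in closedBall (0 : E2) 1, f (x 0) =
      2 * ∫ θ in 0..π, Real.sin θ ^ 2 * f (Real.cos θ) := by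
  rw [← integral_two_mul_sqrt_one_sub_sq_mul,
    ← integral_map (φ := fun x : E2 => x 0) (by fun_prop) hf.aestronglyMeasurable,
    map_apply_zero_restrict_closedBall,
    integral_withDensity_eq_integral_toReal_smul (by fun_prop)
      (ae_of_all _ fun _ => ENNReal.ofReal_lt_top)]
  simp_rw [ENNReal.toReal_ofReal (mul_nonneg zero_le_two (Real.sqrt_nonneg _)), smul_eq_mul]

lemma norm_mul_charFun_restrict_closedBall (ξ : E2) :
    ‖ξ‖ * charFun (volume.restrict (closedBall 0 1)) ξ = (2 * π * J1 ‖ξ‖ : ℝ) := by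
  have hrot (R : E2 ≃ₗᵢ[ℝ] E2) := measurePreserving_restrict_closedBall R 1
  have haxis : ‖ξ‖ = ‖EuclideanSpace.single (0 : Fin 2) ‖ξ‖‖ := by
    rw [PiLp.norm_single, norm_norm]
  rw [charFun_eq_of_norm_eq hrot haxis,
    charFun_eq_integral_cos (charFun_eq_of_norm_eq hrot (norm_neg _))]
  simp only [EuclideanSpace.inner_single_right, conj_trivial]
  rw [setIntegral_closedBall_comp_apply_zero (f := fun u => Real.cos (‖ξ‖ * u)) (by fun_prop), J1,
    ← Complex.ofReal_mul]
  congr 1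
  field_simp

lemma continuous_J1 : Continuous J1 := by
  unfold J1
  refine (continuous_id.div_const π).mul ?_
  exact intervalIntegral.continuous_parametric_intervalIntegral_of_continuous'
    (by unfold Function.uncurry; fun_prop) _ _

lemma lintegral_enorm_rpow_mul_charFun_restrict_closedBall (β : ℝ) :
    ∫⁻ ξ : E2, ‖ξ‖ₑ ^ (β - 2) * ‖charFun (volume.restrict (closedBall 0 1)) ξ‖ₑ ^ 2 =
      ENNReal.ofReal ((2 * π) ^ 2) *
        ∫⁻ ξ : E2, ENNReal.ofReal (‖ξ‖ ^ (β - 4) * J1 ‖ξ‖ ^ 2) := by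
  have hJ := continuous_J1.measurable
  rw [← lintegral_const_mul _ (by fun_prop)]
  refine lintegral_congr_ae ?_
  filter_upwards [Measure.ae_ne volume (0 : E2)] with ξ hξ
  have hpos : 0 < ‖ξ‖ := norm_pos_iff.2 hξ
  have hsq : ‖charFun (volume.restrict (closedBall 0 1)) ξ‖ ^ 2 =
      (2 * π) ^ 2 * J1 ‖ξ‖ ^ 2 / ‖ξ‖ ^ 2 := by
    have h := congrArg (‖·‖ ^ 2) (norm_mul_charFun_restrict_closedBall ξ)
    simp only [norm_mul, Complex.norm_real, Real.norm_eq_abs, mul_pow, sq_abs] at h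
    rw [eq_div_iff (by positivity), mul_comm, h, mul_pow]
  have hexp : ‖ξ‖ ^ (β - 2) = ‖ξ‖ ^ (β - 4) * ‖ξ‖ ^ 2 := by
    rw [← rpow_natCast, ← rpow_add hpos]
    norm_num
    ring_nf
  rw [← ofReal_norm, ← ofReal_norm, ENNReal.ofReal_rpow_of_pos hpos,
    ← ENNReal.ofReal_pow (norm_nonneg _), ← ENNReal.ofReal_mul (by positivity),
    ← ENNReal.ofReal_mul (by positivity), hsq, hexp]
  congr 1
  field_simp

lemma cBeta_pos {β : ℝ} (hβ0 : 0 < β) (hβ2 : β < 2) : 0 < cBeta β := by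
  have hnum : 0 < Gamma (1 - β / 2) := Gamma_pos_of_pos (by linarith)
  unfold cBeta
  positivity

lemma rieszEnergy_restrict_closedBall_eq {β : ℝ} (hβ0 : 0 < β) (hβ2 : β < 2) :
    rieszEnergy β (volume.restrict (closedBall (0 : E2) 1)) =
      ENNReal.ofReal ((2 * π) ^ 2 * cBeta β) *
        ∫⁻ ξ : E2, ENNReal.ofReal (‖ξ‖ ^ (β - 4) * J1 ‖ξ‖ ^ 2) := by
  have hdim : (finrank ℝ E2 : ℝ) = 2 := by
    rw [finrank_euclideanSpace_fin, Nat.cast_ofNat]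
  have hc : Gamma ((2 - β) / 2) / (π ^ (2 / 2 : ℝ) * 4 ^ (β / 2) * Gamma (β / 2)) = cBeta β := by
    rw [cBeta, div_self two_ne_zero, rpow_one, sub_div, div_self two_ne_zero]
  rw [rieszEnergy_eq_lintegral_charFun _ hβ0 (hdim ▸ hβ2), hdim, hc,
    lintegral_enorm_rpow_mul_charFun_restrict_closedBall, ← mul_assoc,
    ← ENNReal.ofReal_mul (cBeta_pos hβ0 hβ2).le, mul_comm (cBeta β)]

/-- For `β ∈ (0,2)`: `(2π)² c_β κ_β = ∫_{B₁×B₁} ‖y-z‖^{-β} dy dz`; in particular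
the integral defining `κ_β` is finite (the integrand is integrable). -/
theorem stmt_5 (β : ℝ) (hβ0 : 0 < β) (hβ2 : β < 2) :
    Integrable (fun ξ : E2 => ‖ξ‖ ^ (β - 4) * (J1 ‖ξ‖) ^ 2) ∧
    (2 * π) ^ 2 * cBeta β * kappaBeta β =
      ∫ y in Metric.closedBall (0 : E2) 1,
        ∫ z in Metric.closedBall (0 : E2) 1, ‖y - z‖ ^ (-β) := by
  have henergy := rieszEnergy_restrict_closedBall_eq hβ0 hβ2
  have hfinite : rieszEnergy β (volume.restrict (closedBall (0 : E2) 1)) < ∞ :=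
    rieszEnergy_restrict_lt_top volume (by simpa using hβ2) isBounded_closedBall
  have hnonneg : 0 ≤ᵐ[volume] fun ξ : E2 => ‖ξ‖ ^ (β - 4) * J1 ‖ξ‖ ^ 2 :=
    ae_of_all _ fun ξ => by positivity
  have hmeas : Measurable fun ξ : E2 => ‖ξ‖ ^ (β - 4) * J1 ‖ξ‖ ^ 2 := by
    have := continuous_J1.measurable
    fun_prop
  have hconst : 0 < (2 * π) ^ 2 * cBeta β := mul_pos (by positivity) (cBeta_pos hβ0 hβ2)
  refine ⟨⟨hmeas.aestronglyMeasurable, ?_⟩, ?_⟩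
  · rw [hasFiniteIntegral_iff_ofReal hnonneg]
    rw [henergy] at hfinite
    exact ENNReal.lt_top_of_mul_ne_top_right hfinite.ne (ENNReal.ofReal_pos.2 hconst).ne'
  · rw [integral_integral_norm_sub_rpow_neg _ hfinite, henergy, ENNReal.toReal_mul,
      ENNReal.toReal_ofReal hconst.le, kappaBeta,
      integral_eq_lintegral_of_nonneg_ae hnonneg hmeas.aestronglyMeasurable]
end
end

section
/- Let q ∈ (1/2,1), δ ∈ [1, 1/q] and 0 ≤ s < t < ∞. There is a constant C depending only on q such that for every z ∈ ℝ² with ‖z‖ > 0, ∫_s^t [ (G_{t−r}^{2q} ∗ G_{r−s}^{2q})(z) ]^{δ} dr ≤ C (t−s)^{1−δ(2q−1)} G_{t−s}(z)^{δ(2q−1)}, where (G_{t−r}^{2q} ∗ G_{r−s}^{2q})(z) = ∫_{ℝ²} G_{t−r}(x)^{2q} G_{r−s}(z−x)^{2q} dx. -/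
/-!
In coordinates whose first axis points along `z`, integrate `G_a^{2q}(x) G_b^{2q}(z - x)` over the
lines orthogonal to `z`. Such a line cuts the two discs in concentric chords of half-lengths `√A`
and `√B`, and contributes at most a multiple of `(√A √B)^{-q} |√A - √B|^{1-2q}`. In the null
coordinates `h = a - x₁`, `k = a + x₁` one has `A = hk` and `B = (e - h)(L - k)`, where
`e = a + b - ‖z‖` and `L = a + b + ‖z‖`; with `a = t - r` and `b = r - s`, the numbers `e` and `L`
depend on `t - s` only, whereas `r` enters through `k = 2(t - r) - h`.

For `δ = 1/q`, Jensen's inequality in `h` and Tonelli's theorem therefore leave a double integral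
over `h ∈ (0, e)` and `k ∈ (0, L)`, and the powers of `h`, `e - h`, `k`, `L - k` become inverse
square roots. The substitution `h = e sin² ψ`, `k = L sin² φ` absorbs these and turns `√A - √B` into
`-√(eL) cos(ψ + φ)`, whose power `-(2 - 1/q) > -1` is integrable. Since
`√(eL) = √((t - s)² - ‖z‖²) = (2π G_{t-s}(z))⁻¹`, this is the bound for `δ = 1/q`. Smaller
`δ` follow from Jensen's inequality in `r`.
-/

open MeasureTheory Real

noncomputable section

open Set
open scoped ENNReal

section IntegralInequalities

variable {α β : Type*} [MeasurableSpace α] [MeasurableSpace β] {μ : Measure α} {ν : Measure β}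

theorem lintegral_rpow_le_lintegral_rpow_rpow_mul_measure_univ {f : α → ℝ≥0∞}
    (hf : AEMeasurable f μ) {p q : ℝ} (hp : 0 < p) (hpq : p ≤ q) :
    ∫⁻ x, f x ^ p ∂μ ≤ (∫⁻ x, f x ^ q ∂μ) ^ (p / q) * μ univ ^ (1 - p / q) := by
  have moments :=
    eLpNorm'_le_eLpNorm'_mul_rpow_measure_univ (μ := μ) hp hpq hf.aestronglyMeasurable
  simp only [eLpNorm', enorm_eq_self] at moments
  have powers := ENNReal.rpow_le_rpow moments hp.le
  rwa [ENNReal.mul_rpow_of_nonneg _ _ hp.le, ← ENNReal.rpow_mul, ← ENNReal.rpow_mul,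
    ← ENNReal.rpow_mul, one_div_mul_cancel hp.ne', ENNReal.rpow_one, one_div_mul_eq_div, sub_mul,
    one_div_mul_cancel hp.ne', one_div_mul_eq_div] at powers

theorem rpow_lintegral_le_measure_univ_rpow_mul_lintegral_rpow {f : α → ℝ≥0∞}
    (hf : AEMeasurable f μ) {p : ℝ} (hp : 1 ≤ p) :
    (∫⁻ x, f x ∂μ) ^ p ≤ μ univ ^ (p - 1) * ∫⁻ x, f x ^ p ∂μ := by
  have hp0 : 0 < p := one_pos.trans_le hp
  have jensen := lintegral_rpow_le_lintegral_rpow_rpow_mul_measure_univ hf one_pos hp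
  simp only [ENNReal.rpow_one] at jensen
  have powers := ENNReal.rpow_le_rpow jensen hp0.le
  rwa [ENNReal.mul_rpow_of_nonneg _ _ hp0.le, ← ENNReal.rpow_mul, ← ENNReal.rpow_mul,
    one_div_mul_cancel hp0.ne', ENNReal.rpow_one, sub_mul, one_mul, one_div_mul_cancel hp0.ne',
    mul_comm] at powers

theorem lintegral_lintegral_rpow_le [SFinite μ] [SFinite ν] {f : α → β → ℝ≥0∞}
    (hf : Measurable (Function.uncurry f)) {p : ℝ} (hp : 1 ≤ p) :
    ∫⁻ y, (∫⁻ x, f x y ∂μ) ^ p ∂ν ≤ μ univ ^ (p - 1) * ∫⁻ x, ∫⁻ y, f x y ^ p ∂ν ∂μ := by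
  have hfp : Measurable (Function.uncurry fun y x => f x y ^ p) :=
    (hf.comp measurable_swap).pow_const p
  calc
    _ ≤ ∫⁻ y, μ univ ^ (p - 1) * ∫⁻ x, f x y ^ p ∂μ ∂ν := lintegral_mono fun y =>
        rpow_lintegral_le_measure_univ_rpow_mul_lintegral_rpow hf.of_uncurry_right.aemeasurable hp
    _ = μ univ ^ (p - 1) * ∫⁻ y, ∫⁻ x, f x y ^ p ∂μ ∂ν :=
        lintegral_const_mul _ hfp.lintegral_prod_right'
    _ = _ := by rw [lintegral_lintegral_swap hfp.aemeasurable]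

-- Where a Bochner integral takes its default value `0`, the left-hand side only decreases.
theorem ofReal_integral_rpow_integral_le (F : α → β → ℝ) {δ : ℝ} (hδ : 0 ≤ δ) :
    ENNReal.ofReal (∫ x, (∫ y, F x y ∂ν) ^ δ ∂μ) ≤ ∫⁻ x, (∫⁻ y, ‖F x y‖ₑ ∂ν) ^ δ ∂μ := by
  refine (Real.ofReal_le_enorm _).trans ((enorm_integral_le_lintegral_enorm _).trans ?_)
  refine lintegral_mono fun x => ?_
  calc
    ‖(∫ y, F x y ∂ν) ^ δ‖ₑ ≤ ‖|∫ y, F x y ∂ν| ^ δ‖ₑ := by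
      rw [enorm_le_iff_norm_le, norm_eq_abs, norm_eq_abs]
      exact (abs_rpow_le_abs_rpow _ _).trans (le_abs_self _)
    _ = ‖∫ y, F x y ∂ν‖ₑ ^ δ := by
      rw [Real.enorm_rpow_of_nonneg (abs_nonneg _) hδ, enorm_abs]
    _ ≤ _ := by
      gcongr
      exact enorm_integral_le_lintegral_enorm _

end IntegralInequalities

section RealLine

theorem lintegral_comp_abs (f : ℝ → ℝ≥0∞) : ∫⁻ x, f |x| = 2 * ∫⁻ x in Ioi 0, f x := by
  have positive : ∫⁻ x in Ioi 0, f |x| = ∫⁻ x in Ioi 0, f x :=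
    setLIntegral_congr_fun measurableSet_Ioi fun x hx => by rw [abs_of_pos hx]
  have negative : ∫⁻ x in Iic 0, f |x| = ∫⁻ x in Ioi 0, f x := by
    have preserving : MeasurePreserving (Neg.neg : ℝ → ℝ) := Measure.measurePreserving_neg volume
    have reflect := preserving.setLIntegral_comp_preimage_emb
      (MeasurableEquiv.neg ℝ).measurableEmbedding (fun x => f |x|) (Ioi 0)
    simp only [neg_preimage, neg_Ioi, neg_zero, abs_neg] at reflect
    rw [setLIntegral_congr Iio_ae_eq_Iic.symm, reflect, positive]
  rw [← lintegral_add_compl _ measurableSet_Ioi (A := Ioi (0 : ℝ)), compl_Ioi, positive, negative,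
    two_mul]

theorem lintegral_comp_sub_mul (f : ℝ → ℝ≥0∞) {c : ℝ} (hc : c ≠ 0) (d : ℝ) :
    ∫⁻ x, f (d - c * x) = ENNReal.ofReal |c⁻¹| * ∫⁻ x, f x := by
  calc
    ∫⁻ x, f (d - c * x) = ∫⁻ x, f (c * (d / c - x)) :=
      lintegral_congr fun x => by rw [mul_sub, mul_div_cancel₀ d hc]
    _ = ∫⁻ x, f (c * x) := lintegral_sub_left_eq_self (fun x => f (c * x)) (d / c)
    _ = ∫⁻ x, f x ∂Measure.map (c * ·) volume :=
      (lintegral_map_equiv f (Homeomorph.mulLeft₀ c hc).toMeasurableEquiv).symm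
    _ = _ := by rw [Real.map_volume_mul_left hc, lintegral_smul_measure, smul_eq_mul]

theorem lintegral_Ioc_rpow {r d : ℝ} (hr : -1 < r) (hd : 0 ≤ d) :
    ∫⁻ x in Ioc 0 d, ENNReal.ofReal (x ^ r) = ENNReal.ofReal (d ^ (r + 1) / (r + 1)) := by
  have integrable : IntegrableOn (fun x : ℝ => x ^ r) (Ioc 0 d) :=
    (intervalIntegrable_iff_integrableOn_Ioc_of_le hd).1
      (intervalIntegral.intervalIntegrable_rpow' hr)
  rw [← ofReal_integral_eq_lintegral_ofReal integrable
      (ae_restrict_of_forall_mem measurableSet_Ioc fun x hx => rpow_nonneg hx.1.le r),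
    ← intervalIntegral.integral_of_le hd, integral_rpow (.inl hr), zero_rpow (by linarith),
    sub_zero]

theorem lintegral_Ioi_rpow {r d : ℝ} (hr : r < -1) (hd : 0 < d) :
    ∫⁻ x in Ioi d, ENNReal.ofReal (x ^ r) = ENNReal.ofReal (-d ^ (r + 1) / (r + 1)) := by
  rw [← ofReal_integral_eq_lintegral_ofReal (integrableOn_Ioi_rpow_of_lt hr hd)
      (ae_restrict_of_forall_mem measurableSet_Ioi fun x hx => rpow_nonneg (hd.trans hx).le r),
    integral_Ioi_rpow_of_lt hr hd]

theorem lintegral_abs_cos_rpow_neg_lt_top {β : ℝ} (hβ0 : 0 ≤ β) (hβ1 : β < 1) :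
    ∫⁻ θ in Ioo 0 π, ENNReal.ofReal |cos θ| ^ (-β) < ∞ := by
  set g : ℝ → ℝ≥0∞ := (Iic (π / 2)).indicator fun x => ENNReal.ofReal (2 / π * x) ^ (-β) with hg
  have cos_le : ∀ θ ∈ Ioo 0 π, ENNReal.ofReal |cos θ| ^ (-β) ≤ g |π / 2 - θ| := by
    intro θ hθ
    have hdist : |π / 2 - θ| ≤ π / 2 := by
      rw [abs_le]
      constructor <;> linarith [hθ.1, hθ.2]
    have jordan := mul_abs_le_abs_sin hdist
    rw [sin_pi_div_two_sub] at jordan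
    rw [hg, indicator_of_mem (mem_Iic.2 hdist), ENNReal.rpow_neg, ENNReal.rpow_neg]
    gcongr
  calc
    _ ≤ ∫⁻ θ in Ioo 0 π, g |π / 2 - θ| := setLIntegral_mono' measurableSet_Ioo cos_le
    _ ≤ ∫⁻ θ, g |π / 2 - θ| := setLIntegral_le_lintegral _ _
    _ = ∫⁻ x, g |x| := lintegral_sub_left_eq_self (fun x => g |x|) (π / 2)
    _ = 2 * ∫⁻ x in Ioc 0 (π / 2), ENNReal.ofReal (2 / π * x) ^ (-β) := by
      rw [lintegral_comp_abs, hg, setLIntegral_indicator measurableSet_Iic, inter_comm,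
        Ioi_inter_Iic]
    _ = 2 * ∫⁻ x in Ioc 0 (π / 2), ENNReal.ofReal (2 / π) ^ (-β) * ENNReal.ofReal (x ^ (-β)) := by
      congr 1
      refine setLIntegral_congr_fun measurableSet_Ioc fun x hx => ?_
      rw [ENNReal.ofReal_mul (by positivity), ← ENNReal.ofReal_rpow_of_pos hx.1,
        ENNReal.mul_rpow_of_ne_top ENNReal.ofReal_ne_top ENNReal.ofReal_ne_top]
    _ < ∞ := by
      rw [lintegral_const_mul _ (by fun_prop), lintegral_Ioc_rpow (by linarith) (by positivity),
        ENNReal.ofReal_rpow_of_pos (by positivity)]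
      finiteness

theorem image_const_mul_sin_sq_Ioo {e : ℝ} (he : 0 < e) :
    (fun ψ => e * sin ψ ^ 2) '' Ioo 0 (π / 2) = Ioo 0 e := by
  have strictMono : StrictMonoOn (fun ψ => e * sin ψ ^ 2) (Icc 0 (π / 2)) := by
    intro x hx y hy hxy
    have : 0 ≤ sin x := sin_nonneg_of_nonneg_of_le_pi hx.1 (by linarith [hx.2, pi_pos])
    have : sin x < sin y := sin_lt_sin_of_lt_of_le_pi_div_two (by linarith [hx.1, pi_pos]) hy.2 hxy
    beta_reduce
    gcongr
  simpa using ContinuousOn.image_Ioo_of_strictMonoOn (by positivity) (by fun_prop) strictMono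

/-- Under `h = e * sin ψ ^ 2`, the measure `dh / √(h * (e - h))` becomes `2 * dψ`. -/
theorem lintegral_inv_sqrt_mul_sub_mul {e : ℝ} (he : 0 < e) (f : ℝ → ℝ≥0∞) :
    ∫⁻ h in Ioo 0 e, (ENNReal.ofReal √(h * (e - h)))⁻¹ * f h =
      2 * ∫⁻ ψ in Ioo 0 (π / 2), f (e * sin ψ ^ 2) := by
  have sin_pos' : ∀ ψ ∈ Ioo 0 (π / 2), 0 < sin ψ := fun ψ hψ =>
    sin_pos_of_pos_of_lt_pi hψ.1 (by linarith [hψ.2, pi_pos])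
  have cos_pos' : ∀ ψ ∈ Ioo 0 (π / 2), 0 < cos ψ := fun ψ hψ =>
    cos_pos_of_mem_Ioo ⟨by linarith [hψ.1, pi_pos], hψ.2⟩
  have deriv : ∀ ψ ∈ Ioo 0 (π / 2), HasDerivWithinAt (fun ψ => e * sin ψ ^ 2)
      (2 * (e * sin ψ * cos ψ)) (Ioo 0 (π / 2)) ψ := fun ψ _ =>
    ((((hasDerivAt_sin ψ).pow 2).const_mul e).congr_deriv (by push_cast; ring)).hasDerivWithinAt
  have injOn : InjOn (fun ψ => e * sin ψ ^ 2) (Ioo 0 (π / 2)) := by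
    intro x hx y hy hxy
    have hsin : sin x = sin y :=
      (sq_eq_sq₀ (sin_pos' x hx).le (sin_pos' y hy).le).1 (mul_left_cancel₀ he.ne' hxy)
    have subset : Ioo 0 (π / 2) ⊆ Icc (-(π / 2)) (π / 2) := fun ψ hψ =>
      ⟨by linarith [hψ.1, pi_pos], hψ.2.le⟩
    exact injOn_sin (subset hx) (subset hy) hsin
  rw [← image_const_mul_sin_sq_Ioo he,
    lintegral_image_eq_lintegral_abs_deriv_mul measurableSet_Ioo deriv injOn,
    ← lintegral_const_mul' _ _ ENNReal.ofNat_ne_top]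
  refine setLIntegral_congr_fun measurableSet_Ioo fun ψ hψ => ?_
  have jacobian_pos : 0 < e * sin ψ * cos ψ :=
    mul_pos (mul_pos he (sin_pos' ψ hψ)) (cos_pos' ψ hψ)
  have sqrt_eq : √(e * sin ψ ^ 2 * (e - e * sin ψ ^ 2)) = e * sin ψ * cos ψ := by
    rw [← sqrt_sq jacobian_pos.le, mul_pow, cos_sq']
    ring_nf
  rw [sqrt_eq, abs_of_pos (by positivity), ENNReal.ofReal_mul two_pos.le, ENNReal.ofReal_ofNat,
    ← mul_assoc, mul_assoc 2, ENNReal.mul_inv_cancel (by simpa) ENNReal.ofReal_ne_top, mul_one]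

end RealLine

section Chords

variable {q : ℝ}

theorem lintegral_Ioc_rpow_neg_mul_add_rpow_neg_le (hq0 : 0 ≤ q) (hq1 : q < 1) {d : ℝ}
    (hd : 0 < d) :
    ∫⁻ v in Ioc 0 d, ENNReal.ofReal (v ^ (-q) * (v + d) ^ (-q)) ≤
      ENNReal.ofReal (1 / (1 - q) * d ^ (1 - 2 * q)) := by
  calc
    _ ≤ ∫⁻ v in Ioc 0 d, ENNReal.ofReal (v ^ (-q)) * ENNReal.ofReal (d ^ (-q)) := by
      refine setLIntegral_mono' measurableSet_Ioc fun v hv => ?_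
      have hv0 := hv.1
      rw [← ENNReal.ofReal_mul (by positivity)]
      gcongr ENNReal.ofReal (_ * ?_)
      exact rpow_le_rpow_of_nonpos hd (by linarith) (by linarith)
    _ = ENNReal.ofReal (1 / (1 - q) * (d ^ (-q + 1) * d ^ (-q))) := by
      rw [lintegral_mul_const _ (by fun_prop), lintegral_Ioc_rpow (by linarith) hd.le,
        ← ENNReal.ofReal_mul (div_nonneg (by positivity) (by linarith))]
      ring_nf
    _ = _ := by
      rw [← rpow_add hd]
      ring_nf

theorem lintegral_Ioi_self_rpow_neg_mul_add_rpow_neg_le (hq : 1 / 2 < q) {d : ℝ} (hd : 0 < d) :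
    ∫⁻ v in Ioi d, ENNReal.ofReal (v ^ (-q) * (v + d) ^ (-q)) ≤
      ENNReal.ofReal (1 / (2 * q - 1) * d ^ (1 - 2 * q)) := by
  calc
    _ ≤ ∫⁻ v in Ioi d, ENNReal.ofReal (v ^ (-q + -q)) := by
      refine setLIntegral_mono' measurableSet_Ioi fun v hv => ?_
      have hv0 : 0 < v := hd.trans hv
      rw [rpow_add hv0]
      gcongr ENNReal.ofReal (_ * ?_)
      exact rpow_le_rpow_of_nonpos hv0 (by linarith) (by linarith)
    _ = _ := by
      rw [lintegral_Ioi_rpow (by linarith) hd, neg_div, ← div_neg]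
      ring_nf

theorem lintegral_Ioi_zero_rpow_neg_mul_add_rpow_neg_le (hq : 1 / 2 < q) (hq1 : q < 1) {d : ℝ}
    (hd : 0 ≤ d) :
    ∫⁻ v in Ioi 0, ENNReal.ofReal (v ^ (-q) * (v + d) ^ (-q)) ≤
      ENNReal.ofReal (1 / (1 - q) + 1 / (2 * q - 1)) * ENNReal.ofReal d ^ (1 - 2 * q) := by
  have : 0 < 1 - q := by linarith
  have h2q : 0 < 2 * q - 1 := by linarith
  rcases hd.eq_or_lt with rfl | hd
  · rw [ENNReal.ofReal_zero, ENNReal.zero_rpow_of_neg (by linarith),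
      ENNReal.mul_top (by rw [← pos_iff_ne_zero, ENNReal.ofReal_pos]; positivity)]
    exact le_top
  rw [← Ioc_union_Ioi_eq_Ioi hd.le]
  refine (lintegral_union_le _ _ _).trans ((add_le_add
    (lintegral_Ioc_rpow_neg_mul_add_rpow_neg_le (by linarith) hq1 hd)
    (lintegral_Ioi_self_rpow_neg_mul_add_rpow_neg_le hq hd)).trans_eq ?_)
  rw [ENNReal.ofReal_rpow_of_pos hd, ← ENNReal.ofReal_mul (by positivity), add_mul,
    ENNReal.ofReal_add (by positivity) (by positivity)]

/-- The comparison function for the integral of `((A - y ^ 2)₊ * (B - y ^ 2)₊) ^ (-q)` over a line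
whose intersections with two discs have half-lengths `√A` and `√B`. It is `∞` where one of the
half-lengths is `0` or where they agree. -/
def chordKernel (q A B : ℝ) : ℝ≥0∞ :=
  ENNReal.ofReal (√A * √B) ^ (-q) * ENNReal.ofReal |√A - √B| ^ (1 - 2 * q)

theorem chordKernel_comm (q A B : ℝ) : chordKernel q A B = chordKernel q B A := by
  rw [chordKernel, chordKernel, mul_comm (√A), abs_sub_comm]

@[fun_prop]
theorem measurable_chordKernel {α : Type*} [MeasurableSpace α] {f g : α → ℝ} (hf : Measurable f)
    (hg : Measurable g) : Measurable fun x => chordKernel q (f x) (g x) := by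
  unfold chordKernel
  fun_prop

theorem sqrt_sub_sq_rpow_le (hq : 0 ≤ q) {A y : ℝ} (hy : 0 ≤ y) (hyA : y < √A) :
    √(A - y ^ 2) ^ (-(2 * q)) ≤ √A ^ (-q) * (√A - y) ^ (-q) := by
  have hA : 0 < √A := hy.trans_lt hyA
  have hdiff : 0 < √A - y := sub_pos.2 hyA
  have product_le : √A * (√A - y) ≤ A - y ^ 2 := by
    nlinarith [sq_sqrt (sqrt_pos.1 hA).le]
  have hpos : 0 < √A * (√A - y) := by positivity
  calc
    √(A - y ^ 2) ^ (-(2 * q)) = (A - y ^ 2) ^ (-q) := by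
      rw [sqrt_eq_rpow, ← rpow_mul (hpos.le.trans product_le)]
      ring_nf
    _ ≤ (√A * (√A - y)) ^ (-q) := rpow_le_rpow_of_nonpos hpos product_le (by linarith)
    _ = _ := mul_rpow hA.le hdiff.le

theorem sqrt_sub_sq_rpow_eq_zero (hq : q ≠ 0) {A y : ℝ} (hyA : A ≤ y ^ 2) :
    √(A - y ^ 2) ^ q = 0 := by
  rw [sqrt_eq_zero_of_nonpos (by linarith), zero_rpow hq]

theorem lintegral_chord_eq_zero (hq : q ≠ 0) {A B : ℝ} (h : A ≤ 0 ∨ B ≤ 0) :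
    ∫⁻ y, ENNReal.ofReal (√(A - y ^ 2) ^ q * √(B - y ^ 2) ^ q) = 0 := by
  rw [lintegral_eq_zero_of_ae_eq_zero (.of_forall fun y => ?_)]
  rcases h with hA | hB
  · simp [sqrt_sub_sq_rpow_eq_zero hq (hA.trans (sq_nonneg y))]
  · simp [sqrt_sub_sq_rpow_eq_zero hq (hB.trans (sq_nonneg y))]

theorem ofReal_chord_le_indicator (hq : 0 < q) {A B y : ℝ} (hA : 0 < A) (hAB : A ≤ B)
    (hy : 0 ≤ y) :
    ENNReal.ofReal (√(A - y ^ 2) ^ (-(2 * q)) * √(B - y ^ 2) ^ (-(2 * q))) ≤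
      ENNReal.ofReal (√A * √B) ^ (-q) * (Ioi 0).indicator
        (fun v => ENNReal.ofReal (v ^ (-q) * (v + (√B - √A)) ^ (-q))) (√A - y) := by
  rcases le_or_gt √A y with hyA | hyA
  · rw [sqrt_sub_sq_rpow_eq_zero (by linarith) ((sqrt_le_left hy).1 hyA), zero_mul,
      ENNReal.ofReal_zero]
    exact zero_le
  have hyB : y < √B := hyA.trans_le (sqrt_le_sqrt hAB)
  have hA_sub : 0 < √A - y := sub_pos.2 hyA
  have : 0 < √B - y := sub_pos.2 hyB
  have hB : 0 < B := hA.trans_le hAB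
  rw [indicator_of_mem (mem_Ioi.2 hA_sub), ENNReal.ofReal_rpow_of_pos (by positivity),
    ← ENNReal.ofReal_mul (by positivity), mul_rpow (sqrt_nonneg A) (sqrt_nonneg B),
    mul_mul_mul_comm, sub_add_sub_cancel']
  gcongr
  · exact sqrt_sub_sq_rpow_le hq.le hy hyA
  · exact sqrt_sub_sq_rpow_le hq.le hy hyB

/-- The constant of the chord bound: twice, for the two halves of the line, the contributions of
the points whose distance to the end of the shorter chord is at most, respectively more than, the
difference of the half-lengths. -/
def chordConst (q : ℝ) : ℝ≥0∞ := 2 * ENNReal.ofReal (1 / (1 - q) + 1 / (2 * q - 1))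

theorem chordConst_ne_top (q : ℝ) : chordConst q ≠ ∞ :=
  ENNReal.mul_ne_top ENNReal.ofNat_ne_top ENNReal.ofReal_ne_top

theorem lintegral_chord_le (hq : 1 / 2 < q) (hq1 : q < 1) (A B : ℝ) :
    ∫⁻ y, ENNReal.ofReal (√(A - y ^ 2) ^ (-(2 * q)) * √(B - y ^ 2) ^ (-(2 * q))) ≤
      chordConst q * chordKernel q A B := by
  wlog hAB : A ≤ B generalizing A B
  · simpa only [mul_comm, chordKernel_comm] using this B A (le_of_not_ge hAB)
  rcases le_or_gt A 0 with hA | hA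
  · rw [lintegral_chord_eq_zero (by linarith) (.inl hA)]
    exact zero_le
  have hsqrt : 0 ≤ √B - √A := sub_nonneg.2 (sqrt_le_sqrt hAB)
  have even := lintegral_comp_abs fun y =>
    ENNReal.ofReal (√(A - y ^ 2) ^ (-(2 * q)) * √(B - y ^ 2) ^ (-(2 * q)))
  simp only [sq_abs] at even
  set K : ℝ≥0∞ := ENNReal.ofReal (√A * √B) ^ (-q)
  set g : ℝ → ℝ≥0∞ :=
    (Ioi 0).indicator fun v => ENNReal.ofReal (v ^ (-q) * (v + (√B - √A)) ^ (-q)) with hg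
  have hgm : Measurable g := Measurable.indicator (by fun_prop) measurableSet_Ioi
  calc
    _ ≤ 2 * ∫⁻ y in Ioi 0, K * g (√A - y) := by
      rw [even]
      gcongr 2 * ?_
      exact setLIntegral_mono' measurableSet_Ioi fun y hy =>
        ofReal_chord_le_indicator (by linarith) hA hAB (le_of_lt hy)
    _ ≤ 2 * ∫⁻ y, K * g (√A - y) := by
      gcongr
      exact Measure.restrict_le_self
    _ = 2 * (K * ∫⁻ v in Ioi 0, ENNReal.ofReal (v ^ (-q) * (v + (√B - √A)) ^ (-q))) := by
      rw [lintegral_const_mul _ (by fun_prop), lintegral_sub_left_eq_self, hg,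
        lintegral_indicator measurableSet_Ioi]
    _ ≤ 2 * (K * (ENNReal.ofReal (1 / (1 - q) + 1 / (2 * q - 1)) *
          ENNReal.ofReal (√B - √A) ^ (1 - 2 * q))) := by
      gcongr
      exact lintegral_Ioi_zero_rpow_neg_mul_add_rpow_neg_le hq hq1 hsqrt
    _ = _ := by
      rw [chordConst, chordKernel, abs_sub_comm, abs_of_nonneg hsqrt, mul_left_comm K, mul_assoc]

end Chords

section NullKernel

variable {q e L : ℝ}

/-- The `chordKernel` of two light cones in null coordinates `h`, `k`, with `k` confined to
`(0, L)`. On the line with these coordinates the two discs cut out chords with squared half-lengths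
`h * k` and `(e - h) * (L - k)`. -/
def nullKernel (q e L h k : ℝ) : ℝ≥0∞ :=
  (Ioo 0 L).indicator (fun k => chordKernel q (h * k) ((e - h) * (L - k))) k

@[fun_prop]
theorem measurable_nullKernel {α : Type*} [MeasurableSpace α] {f g : α → ℝ} (hf : Measurable f)
    (hg : Measurable g) : Measurable fun x => nullKernel q e L (f x) (g x) := by
  have kernel : Measurable fun p : ℝ × ℝ =>
      (univ ×ˢ Ioo 0 L).indicator
        (fun p => chordKernel q (p.1 * p.2) ((e - p.1) * (L - p.2))) p :=
    Measurable.indicator (by fun_prop) (MeasurableSet.univ.prod measurableSet_Ioo)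
  convert kernel.comp (hf.prodMk hg) using 2 with x
  simp [nullKernel, indicator]

theorem lintegral_null_chord_le (hq : 1 / 2 < q) (hq1 : q < 1) {h k : ℝ} (hk : 0 ≤ h + k)
    (hkeL : h + k ≤ e + L) :
    ∫⁻ y, ENNReal.ofReal
        (√(h * k - y ^ 2) ^ (-(2 * q)) * √((e - h) * (L - k) - y ^ 2) ^ (-(2 * q))) ≤
      (Ioo 0 e).indicator (fun h => chordConst q * nullKernel q e L h k) h := by
  by_cases hneg : h * k ≤ 0 ∨ (e - h) * (L - k) ≤ 0
  · rw [lintegral_chord_eq_zero (by linarith) hneg]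
    exact zero_le
  obtain ⟨hpos, hpos'⟩ := not_or.1 hneg
  rw [not_le] at hpos hpos'
  obtain ⟨h0, k0⟩ | ⟨h0, k0⟩ := mul_pos_iff.1 hpos
  swap
  · linarith
  obtain ⟨he, hL⟩ | ⟨he, hL⟩ := mul_pos_iff.1 hpos'
  swap
  · linarith
  rw [indicator_of_mem (mem_Ioo.2 ⟨h0, by linarith⟩), nullKernel,
    indicator_of_mem (mem_Ioo.2 ⟨k0, by linarith⟩)]
  exact lintegral_chord_le hq hq1 _ _

theorem chordKernel_rpow_inv (hq : 0 < q) {h k : ℝ} (hh : h ∈ Ioo 0 e) (hk : k ∈ Ioo 0 L) :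
    chordKernel q (h * k) ((e - h) * (L - k)) ^ q⁻¹ =
      (ENNReal.ofReal √(h * (e - h)))⁻¹ * ((ENNReal.ofReal √(k * (L - k)))⁻¹ *
        ENNReal.ofReal |√(h * k) - √((e - h) * (L - k))| ^ (-(2 - q⁻¹))) := by
  have hh0 := hh.1
  have hk0 := hk.1
  have he : 0 < e - h := sub_pos.2 hh.2
  have : 0 < L - k := sub_pos.2 hk.2
  have half_lengths : √(h * k) * √((e - h) * (L - k)) = √(h * (e - h)) * √(k * (L - k)) := by
    rw [← sqrt_mul (by positivity), ← sqrt_mul (by positivity)]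
    ring_nf
  have exponent : (1 - 2 * q) * q⁻¹ = -(2 - q⁻¹) := by
    field_simp
    ring
  rw [chordKernel, half_lengths, ENNReal.mul_rpow_of_nonneg _ _ (by positivity),
    ← ENNReal.rpow_mul, ← ENNReal.rpow_mul, exponent, neg_mul, mul_inv_cancel₀ hq.ne',
    ENNReal.rpow_neg_one, ENNReal.ofReal_mul (sqrt_nonneg _),
    ENNReal.mul_inv (.inr ENNReal.ofReal_ne_top) (.inl ENNReal.ofReal_ne_top), mul_assoc]

theorem sqrt_mul_sub_sqrt_mul_sin_sq (he : 0 ≤ e) (hL : 0 ≤ L) {ψ φ : ℝ}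
    (hψ : ψ ∈ Ioo 0 (π / 2)) (hφ : φ ∈ Ioo 0 (π / 2)) :
    √(e * sin ψ ^ 2 * (L * sin φ ^ 2)) - √((e - e * sin ψ ^ 2) * (L - L * sin φ ^ 2)) =
      -(√(e * L) * cos (ψ + φ)) := by
  have sin_nonneg' : ∀ θ ∈ Ioo 0 (π / 2), 0 ≤ sin θ := fun θ hθ =>
    sin_nonneg_of_nonneg_of_le_pi hθ.1.le (by linarith [hθ.2, pi_pos])
  have cos_nonneg' : ∀ θ ∈ Ioo 0 (π / 2), 0 ≤ cos θ := fun θ hθ =>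
    cos_nonneg_of_mem_Icc ⟨by linarith [hθ.1, pi_pos], hθ.2.le⟩
  have hsin : e * sin ψ ^ 2 * (L * sin φ ^ 2) = e * L * (sin ψ * sin φ) ^ 2 := by ring
  have hcos : (e - e * sin ψ ^ 2) * (L - L * sin φ ^ 2) = e * L * (cos ψ * cos φ) ^ 2 := by
    rw [mul_pow, cos_sq' ψ, cos_sq' φ]
    ring
  have heL : 0 ≤ e * L := by positivity
  rw [hsin, hcos, sqrt_mul heL ((sin ψ * sin φ) ^ 2), sqrt_mul heL ((cos ψ * cos φ) ^ 2),
    sqrt_sq (mul_nonneg (sin_nonneg' ψ hψ) (sin_nonneg' φ hφ)),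
    sqrt_sq (mul_nonneg (cos_nonneg' ψ hψ) (cos_nonneg' φ hφ)), cos_add]
  ring

theorem setLIntegral_Ioo_comp_add_le (f : ℝ → ℝ≥0∞) {ψ : ℝ} (hψ : ψ ∈ Ioo 0 (π / 2)) :
    ∫⁻ φ in Ioo 0 (π / 2), f (ψ + φ) ≤ ∫⁻ θ in Ioo 0 π, f θ := by
  have shift := (measurePreserving_add_left volume ψ).setLIntegral_comp_preimage_emb
    (measurableEmbedding_addLeft ψ) f (Ioo 0 π)
  rw [← shift]
  refine lintegral_mono_set fun φ hφ => ?_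
  exact ⟨by linarith [hψ.1, hφ.1], by linarith [hψ.2, hφ.2]⟩

/-- The substitution `h = e * sin ψ ^ 2`, `k = L * sin φ ^ 2` cancels the inverse square roots and
turns the difference of half-lengths into a function of `ψ + φ` alone. -/
theorem lintegral_lintegral_abs_sqrt_sub_sqrt_rpow_le (he : 0 < e) (hL : 0 < L) (r : ℝ) :
    ∫⁻ h in Ioo 0 e, ∫⁻ k in Ioo 0 L, (ENNReal.ofReal √(h * (e - h)))⁻¹ *
        ((ENNReal.ofReal √(k * (L - k)))⁻¹ *
          ENNReal.ofReal |√(h * k) - √((e - h) * (L - k))| ^ r) ≤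
      ENNReal.ofReal (2 * π) * (∫⁻ θ in Ioo 0 π, ENNReal.ofReal |cos θ| ^ r) *
        ENNReal.ofReal √(e * L) ^ r := by
  set J : ℝ≥0∞ := ∫⁻ θ in Ioo 0 π, ENNReal.ofReal |cos θ| ^ r
  set S : ℝ≥0∞ := ENNReal.ofReal √(e * L) ^ r
  calc
    _ = ∫⁻ h in Ioo 0 e, (ENNReal.ofReal √(h * (e - h)))⁻¹ *
          ∫⁻ k in Ioo 0 L, (ENNReal.ofReal √(k * (L - k)))⁻¹ *
            ENNReal.ofReal |√(h * k) - √((e - h) * (L - k))| ^ r :=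
      lintegral_congr fun h => lintegral_const_mul _ (by fun_prop)
    _ = 2 * ∫⁻ ψ in Ioo 0 (π / 2), 2 * ∫⁻ φ in Ioo 0 (π / 2),
          ENNReal.ofReal |√(e * sin ψ ^ 2 * (L * sin φ ^ 2)) -
            √((e - e * sin ψ ^ 2) * (L - L * sin φ ^ 2))| ^ r := by
      simp_rw [lintegral_inv_sqrt_mul_sub_mul he, lintegral_inv_sqrt_mul_sub_mul hL]
    _ = 2 * ∫⁻ ψ in Ioo 0 (π / 2), 2 * ∫⁻ φ in Ioo 0 (π / 2),
          S * ENNReal.ofReal |cos (ψ + φ)| ^ r := by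
      congr 1
      refine setLIntegral_congr_fun measurableSet_Ioo fun ψ hψ => ?_
      congr 1
      refine setLIntegral_congr_fun measurableSet_Ioo fun φ hφ => ?_
      rw [sqrt_mul_sub_sqrt_mul_sin_sq he.le hL.le hψ hφ, abs_neg, abs_mul,
        abs_of_nonneg (sqrt_nonneg _), ENNReal.ofReal_mul (sqrt_nonneg _),
        ENNReal.mul_rpow_of_ne_top ENNReal.ofReal_ne_top ENNReal.ofReal_ne_top]
    _ ≤ 2 * ∫⁻ _ in Ioo 0 (π / 2), 2 * (S * J) := by
      gcongr 2 * ?_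
      refine setLIntegral_mono' measurableSet_Ioo fun ψ hψ => ?_
      rw [lintegral_const_mul _ (by fun_prop)]
      gcongr
      exact setLIntegral_Ioo_comp_add_le _ hψ
    _ = _ := by
      rw [setLIntegral_const, Real.volume_Ioo, sub_zero,
        show 2 * π = 2 * (2 * (π / 2)) by ring, ENNReal.ofReal_mul two_pos.le,
        ENNReal.ofReal_mul two_pos.le, ENNReal.ofReal_ofNat]
      ring

theorem lintegral_lintegral_nullKernel_rpow_inv_le (hq : 0 < q) (he : 0 < e) (hL : 0 < L) :
    ∫⁻ h in Ioo 0 e, ∫⁻ k, nullKernel q e L h k ^ q⁻¹ ≤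
      ENNReal.ofReal (2 * π) * (∫⁻ θ in Ioo 0 π, ENNReal.ofReal |cos θ| ^ (-(2 - q⁻¹))) *
        ENNReal.ofReal √(e * L) ^ (-(2 - q⁻¹)) := by
  refine le_trans (le_of_eq ?_)
    (lintegral_lintegral_abs_sqrt_sub_sqrt_rpow_le he hL (-(2 - q⁻¹)))
  refine setLIntegral_congr_fun measurableSet_Ioo fun h hh => ?_
  have indicator_rpow : ∀ k, nullKernel q e L h k ^ q⁻¹ = (Ioo 0 L).indicator
      (fun k => chordKernel q (h * k) ((e - h) * (L - k)) ^ q⁻¹) k := fun k =>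
    (congrFun (indicator_comp_of_zero
      (g := (· ^ q⁻¹)) (ENNReal.zero_rpow_of_pos (inv_pos.2 hq))) k).symm
  simp_rw [indicator_rpow]
  rw [lintegral_indicator measurableSet_Ioo]
  exact setLIntegral_congr_fun measurableSet_Ioo fun k hk => chordKernel_rpow_inv hq hh hk

end NullKernel


section WaveConvolution

theorem exists_orthonormalBasis_norm_smul_eq {𝕜 E ι : Type*} [RCLike 𝕜] [NormedAddCommGroup E]
    [InnerProductSpace 𝕜 E] [FiniteDimensional 𝕜 E] [Fintype ι]
    (hι : Module.finrank 𝕜 E = Fintype.card ι) (i : ι) (z : E) :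
    ∃ b : OrthonormalBasis ι 𝕜 E, (‖z‖ : 𝕜) • b i = z := by
  rcases eq_or_ne z 0 with rfl | hz
  · obtain ⟨b, -⟩ := Orthonormal.exists_orthonormalBasis_extension_of_card_eq hι
      (v := fun _ => (0 : E)) (s := ∅) (by simp [Orthonormal])
    exact ⟨b, by simp⟩
  · obtain ⟨b, hb⟩ := Orthonormal.exists_orthonormalBasis_extension_of_card_eq hι
      (v := fun _ => (‖z‖ : 𝕜)⁻¹ • z) (s := {i}) (by
        rw [orthonormal_subsingleton_iff]
        intro _
        simp [norm_smul, hz])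
    exact ⟨b, by simp [hb i rfl, smul_smul, hz]⟩

theorem lintegral_norm_sq_norm_sub_sq (f : ℝ → ℝ → ℝ≥0∞) (z : E2) :
    ∫⁻ x, f (‖x‖ ^ 2) (‖z - x‖ ^ 2) =
      ∫⁻ p : ℝ × ℝ, f (p.1 ^ 2 + p.2 ^ 2) ((‖z‖ - p.1) ^ 2 + p.2 ^ 2) := by
  obtain ⟨b, hb⟩ := exists_orthonormalBasis_norm_smul_eq (𝕜 := ℝ) (ι := Fin 2) (by simp) 0 z
  let coords : ℝ × ℝ ≃ᵐ E2 := (MeasurableEquiv.finTwoArrow.symm.trans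
    (MeasurableEquiv.toLp 2 (Fin 2 → ℝ))).trans b.measurableEquiv.symm
  have coords_apply : ∀ p, coords p = b.repr.symm !₂[p.1, p.2] := fun _ => rfl
  have preserving : MeasurePreserving coords :=
    (((volume_preserving_finTwoArrow ℝ).symm _).trans
      (PiLp.volume_preserving_toLp (Fin 2))).trans (b.measurePreserving_measurableEquiv.symm _)
  have hz : z = b.repr.symm !₂[‖z‖, 0] := by
    apply b.repr.injective
    conv_lhs => rw [← hb, map_smul, b.repr_self]
    ext i
    fin_cases i <;> simp
  have norm_sq (u v : ℝ) : ‖b.repr.symm !₂[u, v]‖ ^ 2 = u ^ 2 + v ^ 2 := by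
    simp [EuclideanSpace.norm_sq_eq]
  have sub_coords (p : ℝ × ℝ) : z - coords p = b.repr.symm !₂[‖z‖ - p.1, -p.2] := by
    conv_lhs => rw [hz, coords_apply, ← map_sub]
    congr 1
    ext i
    fin_cases i <;> simp
  rw [← preserving.lintegral_comp_emb coords.measurableEmbedding]
  simp_rw [sub_coords, coords_apply, norm_sq, neg_sq]

-- Outside the light cone `√` and `⁻¹` take their default value `0`.
theorem G_eq {t : ℝ} (ht : 0 ≤ t) (x : E2) : G t x = (2 * π * √(t ^ 2 - ‖x‖ ^ 2))⁻¹ := by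
  rcases lt_or_ge ‖x‖ t with hx | hx
  · rw [G, if_pos hx]
  · have : t ^ 2 ≤ ‖x‖ ^ 2 := by gcongr
    rw [G, if_neg hx.not_gt, sqrt_eq_zero_of_nonpos (by linarith), mul_zero, inv_zero]

theorem G_nonneg (t : ℝ) (x : E2) : 0 ≤ G t x := by
  rw [G]
  split_ifs <;> positivity

@[fun_prop]
theorem measurable_G_s8 {α : Type*} [MeasurableSpace α] {f : α → ℝ} {g : α → E2} (hf : Measurable f)
    (hg : Measurable g) : Measurable fun x => G (f x) (g x) := by
  unfold G
  exact Measurable.ite (measurableSet_lt hg.norm hf) (by fun_prop) measurable_const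

theorem G_rpow_le {t p : ℝ} (ht : 0 ≤ t) (hp : 0 ≤ p) (x : E2) :
    G t x ^ p ≤ √(t ^ 2 - ‖x‖ ^ 2) ^ (-p) := by
  rw [G_eq ht, mul_inv, mul_rpow (by positivity) (by positivity), rpow_neg (sqrt_nonneg _),
    inv_rpow (sqrt_nonneg _)]
  refine mul_le_of_le_one_left (by positivity) (rpow_le_one (by positivity) ?_ hp)
  exact inv_le_one_of_one_le₀ (by linarith [pi_gt_three])

variable {q : ℝ}

/-- The convolution `(G_a^{2q} ∗ G_b^{2q})(z)`, as a lower Lebesgue integral, so that it is `∞`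
where the integral diverges. -/
def waveConv (q a b : ℝ) (z : E2) : ℝ≥0∞ := ∫⁻ x, ‖G a x ^ (2 * q) * G b (z - x) ^ (2 * q)‖ₑ

@[fun_prop]
theorem measurable_waveConv {α : Type*} [MeasurableSpace α] {f g : α → ℝ} (hf : Measurable f)
    (hg : Measurable g) (z : E2) : Measurable fun r => waveConv q (f r) (g r) z := by
  have integrand : Measurable fun p : α × E2 =>
      ‖G (f p.1) p.2 ^ (2 * q) * G (g p.1) (z - p.2) ^ (2 * q)‖ₑ := by fun_prop
  exact integrand.lintegral_prod_right'

theorem waveConv_le_lintegral_prod {a b : ℝ} (hq : 0 ≤ q) (ha : 0 ≤ a) (hb : 0 ≤ b) (z : E2) :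
    waveConv q a b z ≤ ∫⁻ p : ℝ × ℝ, ENNReal.ofReal
      (√(a ^ 2 - (p.1 ^ 2 + p.2 ^ 2)) ^ (-(2 * q)) *
        √(b ^ 2 - ((‖z‖ - p.1) ^ 2 + p.2 ^ 2)) ^ (-(2 * q))) := by
  rw [← lintegral_norm_sq_norm_sub_sq fun X Y =>
    ENNReal.ofReal (√(a ^ 2 - X) ^ (-(2 * q)) * √(b ^ 2 - Y) ^ (-(2 * q)))]
  refine lintegral_mono fun x => ?_
  have hGa : 0 ≤ G a x ^ (2 * q) := rpow_nonneg (G_nonneg a x) _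
  have hGb : 0 ≤ G b (z - x) ^ (2 * q) := rpow_nonneg (G_nonneg b (z - x)) _
  rw [Real.enorm_of_nonneg (mul_nonneg hGa hGb)]
  gcongr ENNReal.ofReal (?_ * ?_)
  · exact G_rpow_le ha (by positivity) x
  · exact G_rpow_le hb (by positivity) (z - x)

-- `h = a - x₁` and `2 * a - h = a + x₁` are the null coordinates of a point whose first
-- coordinate, along `z`, is `x₁`.
theorem waveConv_le_lintegral_nullKernel (hq : 1 / 2 < q) (hq1 : q < 1) {a b : ℝ} (ha : 0 ≤ a)
    (hb : 0 ≤ b) (z : E2) :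
    waveConv q a b z ≤ chordConst q *
      ∫⁻ h in Ioo 0 (a + b - ‖z‖), nullKernel q (a + b - ‖z‖) (a + b + ‖z‖) h (2 * a - h) := by
  set e := a + b - ‖z‖ with he
  set L := a + b + ‖z‖ with hL
  set F : ℝ × ℝ → ℝ≥0∞ := fun p => ENNReal.ofReal
    (√(a ^ 2 - (p.1 ^ 2 + p.2 ^ 2)) ^ (-(2 * q)) *
      √(b ^ 2 - ((‖z‖ - p.1) ^ 2 + p.2 ^ 2)) ^ (-(2 * q))) with hF
  have chord : ∀ h, ∫⁻ y, F (a - h, y) ≤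
      (Ioo 0 e).indicator (fun h => chordConst q * nullKernel q e L h (2 * a - h)) h := by
    intro h
    have factor : ∀ y, F (a - h, y) = ENNReal.ofReal (√(h * (2 * a - h) - y ^ 2) ^ (-(2 * q)) *
        √((e - h) * (L - (2 * a - h)) - y ^ 2) ^ (-(2 * q))) := by
      intro y
      simp only [hF, he, hL]
      ring_nf
    simp_rw [factor]
    exact lintegral_null_chord_le hq hq1 (by linarith) (by linarith)
  calc
    waveConv q a b z ≤ ∫⁻ p, F p := waveConv_le_lintegral_prod (by linarith) ha hb z
    _ ≤ ∫⁻ u, ∫⁻ y, F (u, y) := lintegral_prod_le _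
    _ = ∫⁻ h, ∫⁻ y, F (a - h, y) :=
      (lintegral_sub_left_eq_self (fun u => ∫⁻ y, F (u, y)) a).symm
    _ ≤ _ := lintegral_mono chord
    _ = _ := by
      rw [lintegral_indicator measurableSet_Ioo, lintegral_const_mul _ (by fun_prop)]

theorem lintegral_waveConv_rpow_inv_le (hq : 1 / 2 < q) (hq1 : q < 1) (s t : ℝ) (z : E2) :
    ∫⁻ r in Ioc s t, waveConv q (t - r) (r - s) z ^ q⁻¹ ≤
      chordConst q ^ q⁻¹ * (ENNReal.ofReal (t - s) ^ (q⁻¹ - 1) * (ENNReal.ofReal 2⁻¹ *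
        ∫⁻ h in Ioo 0 (t - s - ‖z‖),
          ∫⁻ k, nullKernel q (t - s - ‖z‖) (t - s + ‖z‖) h k ^ q⁻¹)) := by
  have hq0 : 0 < q := by linarith
  have hq_inv : 1 ≤ q⁻¹ := (one_le_inv₀ hq0).2 hq1.le
  have he : t - s - ‖z‖ ≤ t - s := sub_le_self _ (norm_nonneg z)
  set e := t - s - ‖z‖
  set L := t - s + ‖z‖
  calc
    _ ≤ ∫⁻ r in Ioc s t,
          (chordConst q * ∫⁻ h in Ioo 0 e, nullKernel q e L h (2 * (t - r) - h)) ^ q⁻¹ := by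
      refine setLIntegral_mono' measurableSet_Ioc fun r hr => ?_
      have slice := waveConv_le_lintegral_nullKernel hq hq1 (sub_nonneg.2 hr.2)
        (sub_nonneg.2 hr.1.le) z
      rw [sub_add_sub_cancel] at slice
      gcongr
    _ = chordConst q ^ q⁻¹ * ∫⁻ r in Ioc s t,
          (∫⁻ h in Ioo 0 e, nullKernel q e L h (2 * (t - r) - h)) ^ q⁻¹ := by
      simp_rw [ENNReal.mul_rpow_of_nonneg _ _ (zero_le_one.trans hq_inv)]
      exact lintegral_const_mul' _ _
        (ENNReal.rpow_ne_top_of_nonneg (by positivity) (chordConst_ne_top q))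
    _ ≤ chordConst q ^ q⁻¹ * (volume.restrict (Ioo 0 e) univ ^ (q⁻¹ - 1) *
          ∫⁻ h in Ioo 0 e, ∫⁻ r in Ioc s t, nullKernel q e L h (2 * (t - r) - h) ^ q⁻¹) := by
      gcongr
      exact lintegral_lintegral_rpow_le (by unfold Function.uncurry; fun_prop) hq_inv
    _ ≤ _ := by
      rw [← lintegral_const_mul' _ _ ENNReal.ofReal_ne_top, Measure.restrict_apply_univ,
        Real.volume_Ioo, sub_zero]
      gcongr with h
      refine (setLIntegral_le_lintegral _ _).trans_eq ?_
      simpa only [abs_of_pos (inv_pos.2 (two_pos (α := ℝ))), mul_sub, sub_right_comm] using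
        lintegral_comp_sub_mul (fun k => nullKernel q e L h k ^ q⁻¹) two_ne_zero (2 * t - h)

theorem ofReal_sqrt_sub_sq_rpow_neg {T : ℝ} {z : E2} (hz : ‖z‖ < T) (β : ℝ) :
    ENNReal.ofReal √(T ^ 2 - ‖z‖ ^ 2) ^ (-β) =
      ENNReal.ofReal (2 * π) ^ β * ENNReal.ofReal (G T z) ^ β := by
  have hT : 0 ≤ T := (norm_nonneg z).trans hz.le
  have hcone : 0 < √(T ^ 2 - ‖z‖ ^ 2) := sqrt_pos.2 (sub_pos.2 (by gcongr))
  have two_pi_mul_G : 2 * π * G T z = (√(T ^ 2 - ‖z‖ ^ 2))⁻¹ := by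
    rw [G_eq hT]
    field_simp
  rw [← ENNReal.mul_rpow_of_ne_top ENNReal.ofReal_ne_top ENNReal.ofReal_ne_top,
    ← ENNReal.ofReal_mul (by positivity), two_pi_mul_G, ENNReal.ofReal_inv_of_pos hcone,
    ENNReal.inv_rpow, ENNReal.rpow_neg]

theorem exists_lintegral_waveConv_rpow_inv_le (hq : 1 / 2 < q) (hq1 : q < 1) :
    ∃ C ≠ ∞, ∀ (s t : ℝ) (z : E2), ∫⁻ r in Ioc s t, waveConv q (t - r) (r - s) z ^ q⁻¹ ≤
      C * ENNReal.ofReal (t - s) ^ (q⁻¹ - 1) * ENNReal.ofReal (G (t - s) z) ^ (2 - q⁻¹) := by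
  have hq0 : 0 < q := by linarith
  have hq_inv : q⁻¹ < 2 := inv_lt_of_inv_lt₀ two_pos (by linarith)
  have hq_inv' : 1 < q⁻¹ := (one_lt_inv₀ hq0).2 hq1
  set J : ℝ≥0∞ := ∫⁻ θ in Ioo 0 π, ENNReal.ofReal |cos θ| ^ (-(2 - q⁻¹))
  have hJ_top : J ≠ ∞ :=
    (lintegral_abs_cos_rpow_neg_lt_top (by linarith) (by linarith)).ne
  have hconst := chordConst_ne_top q
  refine ⟨chordConst q ^ q⁻¹ * ENNReal.ofReal 2⁻¹ * ENNReal.ofReal (2 * π) * J *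
    ENNReal.ofReal (2 * π) ^ (2 - q⁻¹), by finiteness, fun s t z => ?_⟩
  refine (lintegral_waveConv_rpow_inv_le hq hq1 s t z).trans ?_
  rcases le_or_gt (t - s - ‖z‖) 0 with hcone | hcone
  · simp [Ioo_eq_empty_of_le hcone]
  have null := lintegral_lintegral_nullKernel_rpow_inv_le hq0 hcone
    (L := t - s + ‖z‖) (by linarith [norm_nonneg z])
  rw [show (t - s - ‖z‖) * (t - s + ‖z‖) = (t - s) ^ 2 - ‖z‖ ^ 2 by ring,
    ofReal_sqrt_sub_sq_rpow_neg (by linarith)] at null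
  calc
    _ ≤ chordConst q ^ q⁻¹ * (ENNReal.ofReal (t - s) ^ (q⁻¹ - 1) * (ENNReal.ofReal 2⁻¹ *
          (ENNReal.ofReal (2 * π) * J * (ENNReal.ofReal (2 * π) ^ (2 - q⁻¹) *
            ENNReal.ofReal (G (t - s) z) ^ (2 - q⁻¹))))) := by gcongr
    _ = _ := by ring

theorem rpow_le_sup_one {p : ℝ} (hp : 0 ≤ p) (hp1 : p ≤ 1) (C : ℝ≥0∞) : C ^ p ≤ C ⊔ 1 := calc
  C ^ p ≤ (C ⊔ 1) ^ p := ENNReal.rpow_le_rpow le_sup_left hp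
  _ ≤ (C ⊔ 1) ^ (1 : ℝ) := ENNReal.rpow_le_rpow_of_exponent_le le_sup_right hp1
  _ = C ⊔ 1 := ENNReal.rpow_one _

theorem exists_lintegral_waveConv_rpow_le (hq : 1 / 2 < q) (hq1 : q < 1) :
    ∃ C ≠ ∞, ∀ (δ s t : ℝ) (z : E2), δ ∈ Ioc 0 q⁻¹ → s < t →
      ∫⁻ r in Ioc s t, waveConv q (t - r) (r - s) z ^ δ ≤
        C * ENNReal.ofReal (t - s) ^ (1 - δ * (2 * q - 1)) *
          ENNReal.ofReal (G (t - s) z) ^ (δ * (2 * q - 1)) := by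
  obtain ⟨C, hC, endpoint⟩ := exists_lintegral_waveConv_rpow_inv_le hq hq1
  refine ⟨C ⊔ 1, by finiteness, fun δ s t z hδ hst => ?_⟩
  have hq0 : 0 < q := by linarith
  have hδq : 0 ≤ δ * q := mul_nonneg hδ.1.le hq0.le
  have hδq1 : δ * q ≤ 1 := by simpa [hq0.ne'] using mul_le_mul_of_nonneg_right hδ.2 hq0.le
  have time_exponent : (q⁻¹ - 1) * (δ * q) + (1 - δ * q) = 1 - δ * (2 * q - 1) := by
    field_simp
    ring
  have cone_exponent : (2 - q⁻¹) * (δ * q) = δ * (2 * q - 1) := by field_simp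
  have waveConv_aemeasurable : AEMeasurable (fun r => waveConv q (t - r) (r - s) z)
      (volume.restrict (Ioc s t)) := by fun_prop
  have hT0 : ENNReal.ofReal (t - s) ≠ 0 := by simpa using hst
  set T : ℝ≥0∞ := ENNReal.ofReal (t - s)
  calc
    _ ≤ (∫⁻ r in Ioc s t, waveConv q (t - r) (r - s) z ^ q⁻¹) ^ (δ * q) * T ^ (1 - δ * q) := by
      simpa only [div_inv_eq_mul, Measure.restrict_apply_univ, Real.volume_Ioc] using
        lintegral_rpow_le_lintegral_rpow_rpow_mul_measure_univ waveConv_aemeasurable hδ.1 hδ.2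
    _ ≤ (C * T ^ (q⁻¹ - 1) * ENNReal.ofReal (G (t - s) z) ^ (2 - q⁻¹)) ^ (δ * q) *
          T ^ (1 - δ * q) := by
      gcongr
      exact endpoint s t z
    _ = C ^ (δ * q) * (T ^ ((q⁻¹ - 1) * (δ * q)) * T ^ (1 - δ * q)) *
          ENNReal.ofReal (G (t - s) z) ^ ((2 - q⁻¹) * (δ * q)) := by
      rw [ENNReal.mul_rpow_of_nonneg _ _ hδq, ENNReal.mul_rpow_of_nonneg _ _ hδq,
        ← ENNReal.rpow_mul, ← ENNReal.rpow_mul]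
      ring
    _ = C ^ (δ * q) * T ^ (1 - δ * (2 * q - 1)) *
          ENNReal.ofReal (G (t - s) z) ^ (δ * (2 * q - 1)) := by
      rw [← ENNReal.rpow_add _ _ hT0 ENNReal.ofReal_ne_top, time_exponent, cone_exponent]
    _ ≤ _ := by
      gcongr
      exact rpow_le_sup_one hδq hδq1 C

end WaveConvolution

theorem stmt_8_general (q : ℝ) (hq : q ∈ Ioo (1 / 2 : ℝ) 1) :
    ∃ C : ℝ, ∀ (δ s t : ℝ) (z : E2), δ ∈ Ioc 0 (1 / q) → s < t →
      (∫ r in s..t, (∫ x : E2, G (t - r) x ^ (2 * q) * G (r - s) (z - x) ^ (2 * q)) ^ δ) ≤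
        C * (t - s) ^ (1 - δ * (2 * q - 1)) * G (t - s) z ^ (δ * (2 * q - 1)) := by
  obtain ⟨C, hC, bound⟩ := exists_lintegral_waveConv_rpow_le hq.1 hq.2
  refine ⟨C.toReal, fun δ s t z hδ hst => ?_⟩
  rw [one_div] at hδ
  have hT : 0 < t - s := sub_pos.2 hst
  have hG := G_nonneg (t - s) z
  have hexp : 0 ≤ δ * (2 * q - 1) := mul_nonneg hδ.1.le (by linarith [hq.1])
  rw [intervalIntegral.integral_of_le hst.le, ← ENNReal.ofReal_le_ofReal_iff (by positivity)]
  calc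
    _ ≤ ∫⁻ r in Ioc s t, waveConv q (t - r) (r - s) z ^ δ :=
      ofReal_integral_rpow_integral_le _ hδ.1.le
    _ ≤ _ := bound δ s t z hδ hst
    _ = _ := by
      rw [ENNReal.ofReal_mul (by positivity), ENNReal.ofReal_mul (by positivity),
        ENNReal.ofReal_toReal hC, ENNReal.ofReal_rpow_of_pos hT,
        ENNReal.ofReal_rpow_of_nonneg hG hexp]

/-- For `q ∈ (1/2,1)` there is a constant `C` depending only on `q` such that for every
`δ ∈ [1, 1/q]`, `0 ≤ s < t` and `z ∈ ℝ²` with `‖z‖ > 0`,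
`∫_s^t [(G_{t-r}^{2q} ∗ G_{r-s}^{2q})(z)]^δ dr ≤ C (t-s)^{1-δ(2q-1)} G_{t-s}(z)^{δ(2q-1)}`. -/
theorem stmt_8 (q : ℝ) (hq : q ∈ Set.Ioo (1/2 : ℝ) 1) :
    ∃ C : ℝ, ∀ (δ s t : ℝ) (z : E2), δ ∈ Set.Icc 1 (1/q) → 0 ≤ s → s < t → 0 < ‖z‖ →
      (∫ r in s..t,
          (∫ x : E2, (G (t - r) x) ^ (2 * q) * (G (r - s) (z - x)) ^ (2 * q)) ^ δ) ≤
        C * (t - s) ^ (1 - δ * (2 * q - 1)) * (G (t - s) z) ^ (δ * (2 * q - 1)) :=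
  let ⟨C, bound⟩ := stmt_8_general q hq
  ⟨C, fun δ s t z hδ _ hst _ => bound δ s t z ⟨one_pos.trans_le hδ.1, hδ.2⟩ hst⟩
end
end

section
/- Let q ∈ (1/2,1), s > 0, w > 0 and x > 0 be such that (√x − w)² < s² < (√x + w)². Then 𝒮_q(x) = ∫_{D(x)} (s² − y)^{−q} [ (√x + w)² − y ]^{−1/2} [ y − (√x − w)² ]^{−1/2} dy satisfies 𝒮_q(x) ≤ Beta(1/2, 1−q) · [ (√x + w)² − s² ]^{−1/2} · [ s² − (√x − w)² ]^{(1/2)−q}, where D(x) = { y ∈ ℝ : y < s², (√x − w)² < y < (√x + w)² } and Beta denotes the Euler beta function. -/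
/-! Write `a = (√x-w)² < b = s² < c = (√x+w)²`. On the domain of integration `y < b`, so the factor
`(c - y)^{-1/2}` is at most `(c - b)^{-1/2}`, which comes out of the integral. The affine
substitution `y = a + (b - a) t` turns the remaining integral over `(a, b)` into `(b - a)^{1/2-q}`
times the Euler beta integral. -/

open MeasureTheory Real

noncomputable section

/-- Euler beta function `Beta(a,b) = ∫₀¹ x^{a-1}(1-x)^{b-1} dx`. -/
def eulerBeta (a b : ℝ) : ℝ := ∫ x in (0:ℝ)..1, x ^ (a - 1) * (1 - x) ^ (b - 1)

lemma intervalIntegrable_sub_rpow_mul_sub_rpow {u v : ℝ} (hu : 0 < u) (hv : 0 < v) (a b : ℝ) :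
    IntervalIntegrable (fun y ↦ (y - a) ^ (u - 1) * (b - y) ^ (v - 1)) volume a b := by
  rcases eq_or_ne a b with rfl | hab
  · exact .refl
  have hleft (m : ℝ) : IntervalIntegrable (fun y ↦ (y - a) ^ (u - 1)) volume a m := by
    simpa using (intervalIntegral.intervalIntegrable_rpow' (a := 0) (b := m - a)
      (by linarith : -1 < u - 1)).comp_sub_right a
  have hright (m : ℝ) : IntervalIntegrable (fun y ↦ (b - y) ^ (v - 1)) volume m b := by
    simpa using (intervalIntegral.intervalIntegrable_rpow' (a := b - m) (b := 0)
      (by linarith : -1 < v - 1)).comp_sub_left b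
  -- Each factor is singular only at its own endpoint, so it suffices to split at the midpoint.
  have hleft_cont :
      ContinuousOn (fun y ↦ (y - a) ^ (u - 1)) (Set.uIcc ((a + b) / 2) b) := by
    refine ContinuousOn.rpow_const (by fun_prop) fun y hy ↦ .inl fun hya ↦ ?_
    rcases Set.mem_uIcc.1 hy with hy | hy <;> exact hab (by linarith)
  have hright_cont :
      ContinuousOn (fun y ↦ (b - y) ^ (v - 1)) (Set.uIcc a ((a + b) / 2)) := by
    refine ContinuousOn.rpow_const (by fun_prop) fun y hy ↦ .inl fun hyb ↦ ?_
    rcases Set.mem_uIcc.1 hy with hy | hy <;> exact hab (by linarith)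
  exact ((hleft _).mul_continuousOn hright_cont).trans ((hright _).continuousOn_mul hleft_cont)

lemma integral_sub_rpow_mul_sub_rpow (u v : ℝ) {a b : ℝ} (hab : a < b) :
    ∫ y in a..b, (y - a) ^ (u - 1) * (b - y) ^ (v - 1) =
      eulerBeta u v * (b - a) ^ (u + v - 1) := by
  have hL : 0 < b - a := sub_pos.2 hab
  have hscale : (b - a) * ((b - a) ^ (u - 1) * (b - a) ^ (v - 1)) =
      (b - a) ^ (u + v - 1) := by
    rw [← rpow_add hL, mul_comm, ← rpow_add_one hL.ne']
    congr 1
    ring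
  calc ∫ y in a..b, (y - a) ^ (u - 1) * (b - y) ^ (v - 1)
      = (b - a) * ∫ t in (0 : ℝ)..1,
          ((b - a) * t + a - a) ^ (u - 1) * (b - ((b - a) * t + a)) ^ (v - 1) := by
        rw [intervalIntegral.mul_integral_comp_mul_add
          (f := fun y ↦ (y - a) ^ (u - 1) * (b - y) ^ (v - 1)), mul_zero, zero_add, mul_one,
          sub_add_cancel]
    _ = (b - a) * ∫ t in (0 : ℝ)..1,
          (b - a) ^ (u - 1) * (b - a) ^ (v - 1) * (t ^ (u - 1) * (1 - t) ^ (v - 1)) := by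
        congr 1
        refine intervalIntegral.integral_congr fun t ht ↦ ?_
        rw [Set.uIcc_of_le zero_le_one] at ht
        have hleft : (b - a) * t + a - a = (b - a) * t := by ring
        have hright : b - ((b - a) * t + a) = (b - a) * (1 - t) := by ring
        simp only [hleft, hright, mul_rpow hL.le ht.1, mul_rpow hL.le (sub_nonneg.2 ht.2)]
        ring
    _ = eulerBeta u v * (b - a) ^ (u + v - 1) := by
        rw [intervalIntegral.integral_const_mul, ← mul_assoc, hscale, mul_comm, eulerBeta]

lemma integral_sub_rpow_mul_le {f : ℝ → ℝ} {r a b c : ℝ} (hr : r ≤ 0) (hab : a ≤ b) (hbc : b < c)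
    (hf : IntervalIntegrable f volume a b) (hf_nonneg : ∀ y ∈ Set.Ioo a b, 0 ≤ f y) :
    ∫ y in a..b, (c - y) ^ r * f y ≤ (c - b) ^ r * ∫ y in a..b, f y := by
  have hcont : ContinuousOn (fun y ↦ (c - y) ^ r) (Set.uIcc a b) := by
    rw [Set.uIcc_of_le hab]
    exact ContinuousOn.rpow_const (by fun_prop) fun y hy ↦ .inl (sub_pos.2 (hy.2.trans_lt hbc)).ne'
  rw [← intervalIntegral.integral_const_mul]
  refine intervalIntegral.integral_mono_on_of_le_Ioo hab (hf.continuousOn_mul hcont)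
    (hf.const_mul _) fun y hy ↦ mul_le_mul_of_nonneg_right ?_ (hf_nonneg y hy)
  exact rpow_le_rpow_of_nonpos (sub_pos.2 hbc) (sub_le_sub_left hy.2.le c) hr

theorem stmt_11_general {u v r a b c : ℝ} (hu : 0 < u) (hv : 0 < v) (hr : r ≤ 0)
    (hab : a < b) (hbc : b < c) :
    ∫ y in {y : ℝ | y < b ∧ a < y ∧ y < c},
        (b - y) ^ (v - 1) * (c - y) ^ r * (y - a) ^ (u - 1) ≤
      eulerBeta u v * (c - b) ^ r * (b - a) ^ (u + v - 1) := by
  have hdomain : {y : ℝ | y < b ∧ a < y ∧ y < c} = Set.Ioo a b := by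
    ext y
    exact ⟨fun h ↦ ⟨h.2.1, h.1⟩, fun h ↦ ⟨h.2, h.1, h.2.trans hbc⟩⟩
  rw [hdomain, ← integral_Ioc_eq_integral_Ioo, ← intervalIntegral.integral_of_le hab.le]
  calc ∫ y in a..b, (b - y) ^ (v - 1) * (c - y) ^ r * (y - a) ^ (u - 1)
      = ∫ y in a..b, (c - y) ^ r * ((y - a) ^ (u - 1) * (b - y) ^ (v - 1)) := by
        congr 1 with y
        ring
    _ ≤ (c - b) ^ r * ∫ y in a..b, (y - a) ^ (u - 1) * (b - y) ^ (v - 1) :=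
        integral_sub_rpow_mul_le hr hab.le hbc
          (intervalIntegrable_sub_rpow_mul_sub_rpow hu hv a b) fun y hy ↦
            mul_nonneg (rpow_nonneg (sub_nonneg.2 hy.1.le) _) (rpow_nonneg (sub_nonneg.2 hy.2.le) _)
    _ = eulerBeta u v * (c - b) ^ r * (b - a) ^ (u + v - 1) := by
        rw [integral_sub_rpow_mul_sub_rpow u v hab]
        ring

/-- For `q ∈ (1/2,1)`, `s, w, x > 0` with `(√x-w)² < s² < (√x+w)²`,
`𝒮_q(x) = ∫_{D(x)} (s²-y)^{-q}[(√x+w)²-y]^{-1/2}[y-(√x-w)²]^{-1/2} dy`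
`≤ Beta(1/2, 1-q) [(√x+w)²-s²]^{-1/2} [s²-(√x-w)²]^{1/2-q}`,
where `D(x) = {y : y < s², (√x-w)² < y < (√x+w)²}`. -/
theorem stmt_11 (q s w x : ℝ) (hq : q ∈ Set.Ioo (1/2 : ℝ) 1) (hs : 0 < s) (hw : 0 < w)
    (hx : 0 < x) (h1 : (Real.sqrt x - w) ^ 2 < s ^ 2) (h2 : s ^ 2 < (Real.sqrt x + w) ^ 2) :
    (∫ y in {y : ℝ | y < s ^ 2 ∧ (Real.sqrt x - w) ^ 2 < y ∧ y < (Real.sqrt x + w) ^ 2},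
        (s ^ 2 - y) ^ (-q) * ((Real.sqrt x + w) ^ 2 - y) ^ (-(1 : ℝ) / 2) *
          (y - (Real.sqrt x - w) ^ 2) ^ (-(1 : ℝ) / 2)) ≤
      eulerBeta (1/2) (1 - q) * ((Real.sqrt x + w) ^ 2 - s ^ 2) ^ (-(1 : ℝ) / 2) *
        (s ^ 2 - (Real.sqrt x - w) ^ 2) ^ (1/2 - q) := by
  have hleft_exp : (1 / 2 : ℝ) - 1 = -1 / 2 := by norm_num
  have hsum_exp : 1 / 2 + (1 - q) - 1 = 1 / 2 - q := by ring
  simpa only [hleft_exp, hsum_exp, sub_sub_cancel_left] using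
    stmt_11_general (u := 1 / 2) (v := 1 - q) (r := -1 / 2) one_half_pos (sub_pos.2 hq.2)
      (by norm_num) h1 h2
end
end

section
/- Let q ∈ (1/2,1), 0 < w < s < t, and define 𝒮_q(x) = ∫_{D(x)} (s² − y)^{−q} [ (√x + w)² − y ]^{−1/2} [ y − (√x − w)² ]^{−1/2} dy with D(x) = { y ∈ ℝ : y < s², (√x − w)² < y < (√x + w)² }. There is a constant C depending only on q such that 𝐈_B := ∫_0^{(s−w)²} (t² − x)^{−q} 𝒮_q(x) dx ≤ C · (t² − (s−w)²)^{1−2q}. -/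
open MeasureTheory Real

noncomputable section

/-!
For `0 < x < m²`, where `m = s - w`, the domain `D(x)` is the whole interval between
`(√x - w)²` and `b = (√x + w)²`. There
`s² - y ≥ s² - b = (m - √x)(s + w + √x) ≥ (m - √x)(m + √x) = m² - x`, and the arcsine weight has
mass `B(1/2, 1/2) = π`, so `𝒮_q(x) ≤ π (m² - x)^{-q}`.

Extending the range of integration to all `x < m²` and substituting `m² - x = A v` with
`A = t² - m²` gives
`∫_{-∞}^{m²} (t² - x)^{-p} (m² - x)^{-q} dx = A^{1-p-q} ∫_0^∞ v^{-q} (1 + v)^{-p} dv`,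
and the last integral is finite as soon as `q < 1 < p + q`.
-/

open Set Filter Asymptotics Topology
open ProbabilityTheory (beta beta_pos)

section EulerBeta

variable {α β : ℝ}

lemma intervalIntegral_rpow_mul_sub_rpow_eq_beta {L : ℝ} (hα : 0 < α) (hβ : 0 < β) (hL : 0 < L) :
    ∫ u in 0..L, u ^ (α - 1) * (L - u) ^ (β - 1) = L ^ (α + β - 1) * beta α β := by
  have toComplex : ∀ u ∈ uIcc 0 L, ((u ^ (α - 1) * (L - u) ^ (β - 1) : ℝ) : ℂ) =
      (u : ℂ) ^ ((α : ℂ) - 1) * ((L : ℂ) - u) ^ ((β : ℂ) - 1) := by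
    intro u hu
    rw [uIcc_of_le hL.le] at hu
    simp [Complex.ofReal_cpow hu.1, Complex.ofReal_cpow (sub_nonneg.2 hu.2)]
  have beta_toComplex : (beta α β : ℂ) = Complex.betaIntegral α β := by
    rw [Complex.betaIntegral_eq_Gamma_mul_div _ _ (by simpa) (by simpa), beta]
    simp only [Complex.ofReal_div, Complex.ofReal_mul, ← Complex.Gamma_ofReal, Complex.ofReal_add]
  apply Complex.ofReal_injective
  rw [← intervalIntegral.integral_ofReal, intervalIntegral.integral_congr toComplex,
    Complex.betaIntegral_scaled _ _ hL, ← beta_toComplex]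
  simp [Complex.ofReal_cpow hL.le]

lemma setIntegral_Ioo_rpow_mul_rpow_eq_beta {a b : ℝ} (hα : 0 < α) (hβ : 0 < β) (hab : a < b) :
    ∫ y in Ioo a b, (b - y) ^ (β - 1) * (y - a) ^ (α - 1) =
      (b - a) ^ (α + β - 1) * beta α β := by
  rw [← integral_Ioc_eq_integral_Ioo, ← intervalIntegral.integral_of_le hab.le,
    ← intervalIntegral_rpow_mul_sub_rpow_eq_beta hα hβ (sub_pos.2 hab), ← sub_self a,
    ← intervalIntegral.integral_comp_sub_right
      (fun u => u ^ (α - 1) * (b - a - u) ^ (β - 1)) a]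
  simp only [sub_sub_sub_cancel_right, mul_comm]

lemma integrableOn_Ioo_rpow_mul_rpow {a b : ℝ} (hα : 0 < α) (hβ : 0 < β) :
    IntegrableOn (fun y => (b - y) ^ (β - 1) * (y - a) ^ (α - 1)) (Ioo a b) := by
  rcases le_or_gt b a with hba | hab
  · simp [Ioo_eq_empty_of_le hba]
  · refine Integrable.of_integral_ne_zero ?_
    rw [setIntegral_Ioo_rpow_mul_rpow_eq_beta hα hβ hab]
    exact (mul_pos (rpow_pos_of_pos (sub_pos.2 hab) _) (beta_pos hα hβ)).ne'

end EulerBeta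

section ArcsineWeight

variable {a b : ℝ}

lemma beta_one_half_one_half : beta (1 / 2) (1 / 2) = π := by
  rw [beta, Gamma_one_half_eq, mul_self_sqrt pi_pos.le, add_halves, Gamma_one, div_one]

lemma setIntegral_Ioo_arcsine_weight (hab : a < b) :
    ∫ y in Ioo a b, (b - y) ^ (-(1 : ℝ) / 2) * (y - a) ^ (-(1 : ℝ) / 2) = π := by
  have h := setIntegral_Ioo_rpow_mul_rpow_eq_beta (one_half_pos (α := ℝ)) one_half_pos hab
  rw [beta_one_half_one_half, add_halves, sub_self, rpow_zero, one_mul] at h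
  rw [← h]
  norm_num

lemma integrableOn_Ioo_arcsine_weight :
    IntegrableOn (fun y => (b - y) ^ (-(1 : ℝ) / 2) * (y - a) ^ (-(1 : ℝ) / 2)) (Ioo a b) := by
  convert integrableOn_Ioo_rpow_mul_rpow (a := a) (b := b) (one_half_pos (α := ℝ)) one_half_pos
    using 4 <;> norm_num

lemma setIntegral_Ioo_mul_arcsine_weight_le {c : ℝ} {f : ℝ → ℝ} (hab : a < b)
    (hf₀ : ∀ y ∈ Ioo a b, 0 ≤ f y) (hfc : ∀ y ∈ Ioo a b, f y ≤ c) :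
    ∫ y in Ioo a b, f y * ((b - y) ^ (-(1 : ℝ) / 2) * (y - a) ^ (-(1 : ℝ) / 2)) ≤ π * c := by
  have weight_nonneg : ∀ y ∈ Ioo a b,
      0 ≤ (b - y) ^ (-(1 : ℝ) / 2) * (y - a) ^ (-(1 : ℝ) / 2) := fun y hy =>
    mul_nonneg (rpow_nonneg (sub_pos.2 hy.2).le _) (rpow_nonneg (sub_pos.2 hy.1).le _)
  rw [mul_comm π, ← setIntegral_Ioo_arcsine_weight hab, ← integral_const_mul]
  refine integral_mono_of_nonneg ?_ (integrableOn_Ioo_arcsine_weight.const_mul c) ?_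
  · exact ae_restrict_of_forall_mem measurableSet_Ioo fun y hy =>
      mul_nonneg (hf₀ y hy) (weight_nonneg y hy)
  · exact ae_restrict_of_forall_mem measurableSet_Ioo fun y hy =>
      mul_le_mul_of_nonneg_right (hfc y hy) (weight_nonneg y hy)

end ArcsineWeight

section TwoPowers

variable {p q : ℝ}

lemma add_rpow_neg_isBigO_atTop {A : ℝ} (hp : 0 ≤ p) (hA : 0 ≤ A) :
    (fun u : ℝ => (A + u) ^ (-p)) =O[atTop] fun u => u ^ (-p) := by
  refine .of_bound 1 ?_
  filter_upwards [eventually_gt_atTop 0] with u hu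
  rw [norm_of_nonneg (by positivity), norm_of_nonneg (by positivity), one_mul]
  exact rpow_le_rpow_of_nonpos hu (by linarith) (by linarith)

lemma integrableOn_Ioi_rpow_mul_add_rpow {A : ℝ} (hq : q < 1) (hpq : 1 < p + q) (hA : 0 < A) :
    IntegrableOn (fun u => u ^ (-q) * (A + u) ^ (-p)) (Ioi 0) := by
  have continuousAt_factor : ∀ u : ℝ, 0 ≤ u → ContinuousAt (fun u : ℝ => (A + u) ^ (-p)) u :=
    fun u hu => (continuousAt_const.add continuousAt_id).rpow_const
      (.inl (add_pos_of_pos_of_nonneg hA hu).ne')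
  have locallyIntegrable : LocallyIntegrableOn (fun u : ℝ => (A + u) ^ (-p)) (Ioi 0) :=
    ContinuousOn.locallyIntegrableOn
      (fun u hu => (continuousAt_factor u (le_of_lt hu)).continuousWithinAt) measurableSet_Ioi
  have isBigO_zero : (fun u : ℝ => (A + u) ^ (-p)) =O[𝓝[>] 0] fun u => u ^ (-(0 : ℝ)) := by
    simpa only [neg_zero, rpow_zero] using
      ((continuousAt_factor 0 le_rfl).tendsto.mono_left nhdsWithin_le_nhds).isBigO_one ℝ
  simpa only [sub_sub_cancel_left] using mellin_convergent_of_isBigO_scalar locallyIntegrable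
    (add_rpow_neg_isBigO_atTop (by linarith) hA.le) (by linarith : 1 - q < p) isBigO_zero
    (by linarith)

lemma setIntegral_Ioi_rpow_mul_add_rpow {A : ℝ} (hA : 0 < A) :
    ∫ u in Ioi 0, u ^ (-q) * (A + u) ^ (-p) =
      A ^ (1 - (p + q)) * ∫ v in Ioi 0, v ^ (-q) * (1 + v) ^ (-p) := by
  have homogeneous : ∀ v ∈ Ioi (0 : ℝ), (A * v) ^ (-q) * (A + A * v) ^ (-p) =
      A ^ (-q) * A ^ (-p) * (v ^ (-q) * (1 + v) ^ (-p)) := by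
    intro v (hv : 0 < v)
    rw [← mul_one_add, mul_rpow hA.le hv.le, mul_rpow hA.le (by positivity)]
    ring
  have exponent : A * (A ^ (-q) * A ^ (-p)) = A ^ (1 - (p + q)) := by
    rw [show 1 - (p + q) = 1 + (-q + -p) by ring, rpow_add hA, rpow_one, rpow_add hA]
  rw [← mul_zero A, ← integral_comp_mul_left_Ioi' _ 0 hA, mul_zero,
    setIntegral_congr_fun measurableSet_Ioi homogeneous, integral_const_mul, smul_eq_mul,
    ← mul_assoc, exponent]

lemma integrableOn_Iio_sub_rpow_mul_sub_rpow {M N : ℝ} (hq : q < 1) (hpq : 1 < p + q)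
    (hMN : M < N) : IntegrableOn (fun x => (M - x) ^ (-q) * (N - x) ^ (-p)) (Iio M) := by
  have h := ((Measure.measurePreserving_sub_left volume M).integrableOn_comp_preimage
    (Homeomorph.subLeft M).measurableEmbedding).2
    (integrableOn_Ioi_rpow_mul_add_rpow hq hpq (sub_pos.2 hMN))
  simpa [Function.comp_def] using h

lemma setIntegral_Iio_sub_rpow_mul_sub_rpow {M N : ℝ} (hMN : M < N) :
    ∫ x in Iio M, (M - x) ^ (-q) * (N - x) ^ (-p) =
      (N - M) ^ (1 - (p + q)) * ∫ v in Ioi 0, v ^ (-q) * (1 + v) ^ (-p) := by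
  rw [← setIntegral_Ioi_rpow_mul_add_rpow (sub_pos.2 hMN),
    ← (Measure.measurePreserving_sub_left volume M).setIntegral_preimage_emb
      (Homeomorph.subLeft M).measurableEmbedding]
  simp [sub_sub_eq_add_sub, sub_add_eq_add_sub]

end TwoPowers

/-- The inner integral `𝒮_q(x)`, with its dependence on `s` and `w` made explicit. -/
def innerIntegral (q s w x : ℝ) : ℝ :=
  ∫ y in {y : ℝ | y < s ^ 2 ∧ (√x - w) ^ 2 < y ∧ y < (√x + w) ^ 2},
    (s ^ 2 - y) ^ (-q) * ((√x + w) ^ 2 - y) ^ (-(1 : ℝ) / 2) *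
      (y - (√x - w) ^ 2) ^ (-(1 : ℝ) / 2)

section InnerIntegral

variable {p q s t w x : ℝ}

lemma innerIntegral_nonneg : 0 ≤ innerIntegral q s w x := by
  refine setIntegral_nonneg (measurableSet_Iio.inter measurableSet_Ioo) ?_
  rintro y ⟨hs, hleft, hright⟩
  have := sub_pos.2 hs
  have := sub_pos.2 hleft
  have := sub_pos.2 hright
  positivity

lemma sq_sub_sub_le_sq_sub_sqrt_add_sq (hw : 0 ≤ w) (hx : 0 ≤ x) (hxm : √x ≤ s - w) :
    (s - w) ^ 2 - x ≤ s ^ 2 - (√x + w) ^ 2 := by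
  nlinarith [sq_sqrt hx, mul_nonneg hw (sub_nonneg.2 hxm)]

lemma innerIntegral_le (hq : 0 ≤ q) (hw : 0 < w) (hws : w < s) (hx : x ∈ Ioo 0 ((s - w) ^ 2)) :
    innerIntegral q s w x ≤ π * ((s - w) ^ 2 - x) ^ (-q) := by
  have sqrt_lt : √x < s - w := (sqrt_lt' (sub_pos.2 hws)).2 hx.2
  have gap : (s - w) ^ 2 - x ≤ s ^ 2 - (√x + w) ^ 2 :=
    sq_sub_sub_le_sq_sub_sqrt_add_sq hw.le hx.1.le sqrt_lt.le
  have gap_pos : 0 < (s - w) ^ 2 - x := sub_pos.2 hx.2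
  have domain_eq : {y : ℝ | y < s ^ 2 ∧ (√x - w) ^ 2 < y ∧ y < (√x + w) ^ 2} =
      Ioo ((√x - w) ^ 2) ((√x + w) ^ 2) :=
    inter_eq_right.2 fun y hy => show y < s ^ 2 by linarith [hy.2]
  have endpoints_lt : (√x - w) ^ 2 < (√x + w) ^ 2 := by
    nlinarith [mul_pos (sqrt_pos.2 hx.1) hw]
  simp only [innerIntegral, domain_eq, mul_assoc]
  refine setIntegral_Ioo_mul_arcsine_weight_le endpoints_lt (fun y hy => ?_) (fun y hy => ?_)
  · exact rpow_nonneg (by linarith [hy.2]) _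
  · exact rpow_le_rpow_of_nonpos gap_pos (by linarith [hy.2]) (neg_nonpos.2 hq)

theorem stmt_14_general (hq₀ : 0 ≤ q) (hq₁ : q < 1) (hpq : 1 < p + q) (hw : 0 < w) (hws : w < s)
    (hst : s - w < t) :
    ∫ x in Ioo 0 ((s - w) ^ 2), (t ^ 2 - x) ^ (-p) * innerIntegral q s w x ≤
      (π * ∫ v in Ioi 0, v ^ (-q) * (1 + v) ^ (-p)) *
        (t ^ 2 - (s - w) ^ 2) ^ (1 - (p + q)) := by
  have hMN : (s - w) ^ 2 < t ^ 2 := pow_lt_pow_left₀ hst (sub_pos.2 hws).le two_ne_zero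
  have outer_nonneg : ∀ x < (s - w) ^ 2, 0 ≤ (t ^ 2 - x) ^ (-p) := fun x hx =>
    rpow_nonneg (by linarith) _
  have integrableOn_majorant : IntegrableOn
      (fun x => π * (((s - w) ^ 2 - x) ^ (-q) * (t ^ 2 - x) ^ (-p))) (Iio ((s - w) ^ 2)) :=
    (integrableOn_Iio_sub_rpow_mul_sub_rpow hq₁ hpq hMN).const_mul π
  calc ∫ x in Ioo 0 ((s - w) ^ 2), (t ^ 2 - x) ^ (-p) * innerIntegral q s w x
      ≤ ∫ x in Ioo 0 ((s - w) ^ 2), π * (((s - w) ^ 2 - x) ^ (-q) * (t ^ 2 - x) ^ (-p)) := by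
        refine integral_mono_of_nonneg ?_ (integrableOn_majorant.mono_set Ioo_subset_Iio_self) ?_
        · exact ae_restrict_of_forall_mem measurableSet_Ioo fun x hx =>
            mul_nonneg (outer_nonneg x hx.2) innerIntegral_nonneg
        · refine ae_restrict_of_forall_mem measurableSet_Ioo fun x hx => ?_
          exact (mul_le_mul_of_nonneg_left (innerIntegral_le hq₀ hw hws hx)
            (outer_nonneg x hx.2)).trans_eq (by ring)
    _ ≤ ∫ x in Iio ((s - w) ^ 2), π * (((s - w) ^ 2 - x) ^ (-q) * (t ^ 2 - x) ^ (-p)) := by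
        refine setIntegral_mono_set integrableOn_majorant ?_ Ioo_subset_Iio_self.eventuallyLE
        exact ae_restrict_of_forall_mem measurableSet_Iio fun x hx =>
          mul_nonneg pi_pos.le (mul_nonneg (rpow_nonneg (sub_pos.2 hx).le _) (outer_nonneg x hx))
    _ = _ := by
        rw [integral_const_mul, setIntegral_Iio_sub_rpow_mul_sub_rpow hMN]
        ring

end InnerIntegral

/-- For `q ∈ (1/2,1)` there is a constant `C` depending only on `q` such that for all
`0 < w < s < t`, with
`𝒮_q(x) = ∫_{D(x)} (s²-y)^{-q}[(√x+w)²-y]^{-1/2}[y-(√x-w)²]^{-1/2} dy`,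
`𝐈_B = ∫_0^{(s-w)²} (t²-x)^{-q} 𝒮_q(x) dx ≤ C (t²-(s-w)²)^{1-2q}`. -/
theorem stmt_14 (q : ℝ) (hq : q ∈ Set.Ioo (1/2 : ℝ) 1) :
    ∃ C : ℝ, ∀ s t w : ℝ, 0 < w → w < s → s < t →
      (∫ x in Set.Ioo (0 : ℝ) ((s - w) ^ 2),
          (t ^ 2 - x) ^ (-q) *
            ∫ y in {y : ℝ | y < s ^ 2 ∧ (Real.sqrt x - w) ^ 2 < y ∧
                y < (Real.sqrt x + w) ^ 2},
              (s ^ 2 - y) ^ (-q) * ((Real.sqrt x + w) ^ 2 - y) ^ (-(1 : ℝ) / 2) *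
                (y - (Real.sqrt x - w) ^ 2) ^ (-(1 : ℝ) / 2)) ≤
        C * (t ^ 2 - (s - w) ^ 2) ^ (1 - 2 * q) := by
  refine ⟨π * ∫ v in Ioi 0, v ^ (-q) * (1 + v) ^ (-q), fun s t w hw hws hst => ?_⟩
  rw [two_mul]
  exact stmt_14_general (by linarith [hq.1]) hq.2 (by linarith [hq.1]) hw hws (by linarith)
end
end

section
/- Let q ∈ (1/2,1), δ ∈ [1, 1/q], 0 ≤ s < t and w > 0. For r ∈ (s,t) set μ(r) = min(t−r, r−s) and ν(r) = max(t−r, r−s). There is a constant C depending only on q (and δ through q) such that ∫_s^t 𝟙{w < μ(r)} · [ ν(r)² − (μ(r) − w)² ]^{δ(1−2q)} dr ≤ C (t−s)^{δ(1−2q)+1} [ (t−s)² − w² ]^{δ(1/2 − q)} 𝟙{w < t−s}. -/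
open MeasureTheory Real

noncomputable section

/-!
Put `L = t - s`, `m = (s + t) / 2` and `p = δ (1 - 2q)`, so that `-1 < 1/q - 2 ≤ p ≤ 0`. Since
`μ + ν = L` and `ν - μ = 2 |r - m|`, the difference of squares factors as
`ν² - (μ - w)² = (2 |r - m| + w) (L - w)`. Where the integrand does not vanish, `w < μ ≤ L / 2`, so
this is at least `|r - m| L`, and the integrand is at most `L ^ p |r - m| ^ p`. As `p > -1`, the
singularity at `m` is integrable and the integral is at most `2 L ^ (2p + 1) / (p + 1)`. Finally
`L ^ p ≤ (L² - w²) ^ (p / 2)` because `p ≤ 0`.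
-/

section AbsRpow

variable {p : ℝ}

lemma intervalIntegrable_abs_sub_rpow (hp : -1 < p) (c a b : ℝ) :
    IntervalIntegrable (fun x => |x - c| ^ p) volume a b := by
  have pos : ∀ y : ℝ, 0 < y → IntervalIntegrable (fun x => |x| ^ p) volume 0 y := fun y hy =>
    (intervalIntegral.intervalIntegrable_rpow' hp).congr fun x hx => by
      rw [Set.uIoc_of_le hy.le] at hx
      simp only [abs_of_pos hx.1]
  have centred : IntervalIntegrable (fun x => |x| ^ p) volume (a - c) (b - c) :=
    intervalIntegrable_of_even (fun x => by rw [abs_neg]) pos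
  simpa only [sub_add_cancel] using centred.comp_sub_right c

lemma integral_abs_rpow (hp : -1 < p) {h : ℝ} (hh : 0 ≤ h) :
    ∫ x in -h..h, |x| ^ p = 2 * (h ^ (p + 1) / (p + 1)) := by
  have integrable (a b : ℝ) : IntervalIntegrable (fun x => |x| ^ p) volume a b := by
    simpa only [sub_zero] using intervalIntegrable_abs_sub_rpow hp 0 a b
  have right : ∫ x in 0..h, |x| ^ p = h ^ (p + 1) / (p + 1) := by
    calc ∫ x in 0..h, |x| ^ p = ∫ x in 0..h, x ^ p :=
          intervalIntegral.integral_congr fun x hx => by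
            rw [Set.uIcc_of_le hh] at hx
            simp only [abs_of_nonneg hx.1]
      _ = h ^ (p + 1) / (p + 1) := by
          rw [integral_rpow (Or.inl hp), zero_rpow (by linarith), sub_zero]
  have left : ∫ x in -h..0, |x| ^ p = ∫ x in 0..h, |x| ^ p := by
    simpa only [abs_neg, neg_zero] using
      (intervalIntegral.integral_comp_neg (a := 0) (b := h) fun x => |x| ^ p).symm
  rw [← intervalIntegral.integral_add_adjacent_intervals (integrable _ 0) (integrable 0 _),
    left, right, two_mul]

lemma integral_abs_sub_midpoint_rpow (hp : -1 < p) {a b : ℝ} (hab : a ≤ b) :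
    ∫ x in a..b, |x - (a + b) / 2| ^ p = 2 * (((b - a) / 2) ^ (p + 1) / (p + 1)) := by
  rw [intervalIntegral.integral_comp_sub_right (fun x => |x| ^ p),
    ← integral_abs_rpow hp (by linarith)]
  congr 1 <;> ring

end AbsRpow

lemma rpow_le_sq_sub_sq_rpow_half {x y p : ℝ} (hy : 0 ≤ y) (hyx : y < x) (hp : p ≤ 0) :
    x ^ p ≤ (x ^ 2 - y ^ 2) ^ (p / 2) := by
  have hx : 0 ≤ x := hy.trans hyx.le
  calc x ^ p = (x ^ 2) ^ (p / 2) := by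
        rw [← rpow_natCast, ← rpow_mul hx, Nat.cast_ofNat, mul_div_cancel₀ p two_ne_zero]
    _ ≤ (x ^ 2 - y ^ 2) ^ (p / 2) :=
        rpow_le_rpow_of_nonpos (by nlinarith) (sub_le_self _ (sq_nonneg y)) (by linarith)

lemma max_sq_sub_min_sub_sq (a b w : ℝ) :
    max a b ^ 2 - (min a b - w) ^ 2 = (|a - b| + w) * (a + b - w) := by
  rw [← max_sub_min_eq_abs', ← max_add_min a b]
  ring

/-- The integrand `𝟙{w < μ} (ν² - (μ - w)²) ^ p` of the theorem, as a function of the two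
distances `a = t - r` and `b = r - s`, for which `μ = min a b` and `ν = max a b`. -/
def truncKernel (p w a b : ℝ) : ℝ :=
  if w < min a b then (max a b ^ 2 - (min a b - w) ^ 2) ^ p else 0

section TruncKernel

variable {p w a b s t : ℝ}

lemma truncKernel_nonneg (hw : 0 ≤ w) : 0 ≤ truncKernel p w a b := by
  unfold truncKernel
  split_ifs with h
  · obtain ⟨ha, hb⟩ := lt_min_iff.mp h
    rw [max_sq_sub_min_sub_sq]
    exact rpow_nonneg (mul_nonneg (by positivity) (by linarith)) p
  · exact le_rfl

lemma truncKernel_eq_zero (h : min a b ≤ w) : truncKernel p w a b = 0 :=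
  if_neg h.not_gt

/-- For `a = b` and `p < 0` the bound would fail, as `0 ^ p = 0`. -/
lemma truncKernel_le (hp : p ≤ 0) (hw : 0 ≤ w) (hsum : 0 ≤ a + b) (hab : a ≠ b) :
    truncKernel p w a b ≤ (a + b) ^ p * (|a - b| / 2) ^ p := by
  have hdist : 0 < |a - b| := abs_pos.mpr (sub_ne_zero.mpr hab)
  unfold truncKernel
  split_ifs with h
  · obtain ⟨ha, hb⟩ := lt_min_iff.mp h
    have hsum' : 0 < a + b := by linarith
    rw [max_sq_sub_min_sub_sq, ← mul_rpow hsum (by positivity)]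
    refine rpow_le_rpow_of_nonpos (mul_pos hsum' (half_pos hdist)) ?_ hp
    calc (a + b) * (|a - b| / 2) = |a - b| * ((a + b) / 2) := by ring
      _ ≤ (|a - b| + w) * (a + b - w) := by gcongr <;> linarith
  · positivity

lemma integral_truncKernel_le (hp : -1 < p) (hp0 : p ≤ 0) (hw : 0 ≤ w) (hst : s ≤ t) :
    ∫ r in s..t, truncKernel p w (t - r) (r - s) ≤
      (t - s) ^ p * (2 * (((t - s) / 2) ^ (p + 1) / (p + 1))) := by
  have le_off_midpoint (r : ℝ) (hr : r ≠ (s + t) / 2) :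
      truncKernel p w (t - r) (r - s) ≤ (t - s) ^ p * |r - (s + t) / 2| ^ p := by
    have hsum : t - r + (r - s) = t - s := by ring
    have hdist : |t - r - (r - s)| / 2 = |r - (s + t) / 2| := by
      have factor : t - r - (r - s) = 2 * ((s + t) / 2 - r) := by ring
      rw [factor, abs_mul, abs_two, mul_div_cancel_left₀ _ two_ne_zero, abs_sub_comm]
    rw [← hsum, ← hdist]
    exact truncKernel_le hp0 hw (by linarith) fun h => hr (by linarith)
  calc ∫ r in s..t, truncKernel p w (t - r) (r - s)
      ≤ ∫ r in s..t, (t - s) ^ p * |r - (s + t) / 2| ^ p := by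
        rw [intervalIntegral.integral_of_le hst, intervalIntegral.integral_of_le hst]
        refine integral_mono_of_nonneg (ae_of_all _ fun r => truncKernel_nonneg hw)
          ((intervalIntegrable_abs_sub_rpow hp _ s t).1.const_mul _) (ae_restrict_of_ae ?_)
        filter_upwards [Measure.ae_ne volume ((s + t) / 2)] with r hr
        exact le_off_midpoint r hr
    _ = (t - s) ^ p * (2 * (((t - s) / 2) ^ (p + 1) / (p + 1))) := by
        rw [intervalIntegral.integral_const_mul, integral_abs_sub_midpoint_rpow hp hst]

lemma integral_truncKernel_le_indicator {c : ℝ} (hc : 0 < c) (hcp : c ≤ p + 1) (hp : p ≤ 0)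
    (hw : 0 ≤ w) (hst : s ≤ t) :
    ∫ r in s..t, truncKernel p w (t - r) (r - s) ≤
      2 / c * (t - s) ^ (p + 1) * ((t - s) ^ 2 - w ^ 2) ^ (p / 2) *
        (if w < t - s then 1 else 0) := by
  split_ifs with hwL
  · have hp1 : 0 < p + 1 := hc.trans_le hcp
    have hL : 0 ≤ t - s := sub_nonneg.mpr hst
    have hD : 0 ≤ (t - s) ^ 2 - w ^ 2 := by nlinarith
    calc ∫ r in s..t, truncKernel p w (t - r) (r - s)
        ≤ (t - s) ^ p * (2 * (((t - s) / 2) ^ (p + 1) / (p + 1))) :=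
          integral_truncKernel_le (by linarith) hp hw hst
      _ ≤ ((t - s) ^ 2 - w ^ 2) ^ (p / 2) * (2 * ((t - s) ^ (p + 1) / c)) := by
          gcongr
          · exact rpow_le_sq_sub_sq_rpow_half hw hwL hp
          · exact half_le_self hL
      _ = 2 / c * (t - s) ^ (p + 1) * ((t - s) ^ 2 - w ^ 2) ^ (p / 2) * 1 := by ring
  · have vanishes (r : ℝ) : truncKernel p w (t - r) (r - s) = 0 :=
      truncKernel_eq_zero <| min_le_iff.mpr <| by
        by_contra! h
        linarith
    simp only [vanishes, intervalIntegral.integral_zero, mul_zero, le_refl]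

end TruncKernel

theorem stmt_15_general {q δ s t w : ℝ} (hq : q ∈ Set.Ico (1 / 2 : ℝ) 1)
    (hδ : δ ∈ Set.Icc 0 (1 / q)) (hst : s ≤ t) (hw : 0 ≤ w) :
    (∫ r in s..t,
        if w < min (t - r) (r - s) then
          ((max (t - r) (r - s)) ^ 2 - (min (t - r) (r - s) - w) ^ 2) ^ (δ * (1 - 2 * q))
        else 0) ≤
      2 / (1 / q - 1) * (t - s) ^ (δ * (1 - 2 * q) + 1) *
        ((t - s) ^ 2 - w ^ 2) ^ (δ * (1 / 2 - q)) * (if w < t - s then 1 else 0) := by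
  obtain ⟨hq_half, hq_one⟩ := hq
  have hq_pos : 0 < q := by linarith
  have hq_inv : 0 < 1 / q - 1 := sub_pos.mpr (one_lt_one_div hq_pos hq_one)
  have exponent_nonpos : δ * (1 - 2 * q) ≤ 0 :=
    mul_nonpos_of_nonneg_of_nonpos hδ.1 (by linarith)
  have exponent_lower : 1 / q - 1 ≤ δ * (1 - 2 * q) + 1 := by
    calc 1 / q - 1 = 1 / q * (1 - 2 * q) + 1 := by field
      _ ≤ δ * (1 - 2 * q) + 1 := by
        gcongr ?_ + 1
        exact mul_le_mul_of_nonpos_right hδ.2 (by linarith)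
  have half_exponent : δ * (1 / 2 - q) = δ * (1 - 2 * q) / 2 := by ring
  rw [half_exponent]
  exact integral_truncKernel_le_indicator hq_inv exponent_lower exponent_nonpos hw hst

/-- For `q ∈ (1/2,1)` there is a constant `C` depending only on `q` such that for all
`δ ∈ [1,1/q]`, `0 ≤ s < t`, `w > 0`, with `μ(r) = min(t-r,r-s)` and `ν(r) = max(t-r,r-s)`,
`∫_s^t 𝟙{w < μ(r)} [ν(r)² - (μ(r)-w)²]^{δ(1-2q)} dr`
`≤ C (t-s)^{δ(1-2q)+1} [(t-s)²-w²]^{δ(1/2-q)} 𝟙{w < t-s}`. -/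
theorem stmt_15 (q : ℝ) (hq : q ∈ Set.Ioo (1/2 : ℝ) 1) :
    ∃ C : ℝ, ∀ δ s t w : ℝ, δ ∈ Set.Icc 1 (1/q) → 0 ≤ s → s < t → 0 < w →
      (∫ r in s..t,
          if w < min (t - r) (r - s) then
            ((max (t - r) (r - s)) ^ 2 - (min (t - r) (r - s) - w) ^ 2) ^ (δ * (1 - 2 * q))
          else 0) ≤
        C * (t - s) ^ (δ * (1 - 2 * q) + 1) * ((t - s) ^ 2 - w ^ 2) ^ (δ * (1/2 - q)) *
          (if w < t - s then 1 else 0) := by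
  exact ⟨2 / (1 / q - 1), fun δ s t w hδ _ hst hw =>
    stmt_15_general ⟨hq.1.le, hq.2⟩ ⟨by linarith [hδ.1], hδ.2⟩ hst.le hw.le⟩
end
end
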